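/- The restriction of φ_R to the center satisfies φ_R|_{Z(U(gl(m+1|n)))} = χ_{0,m|n}^{−1} ∘ τ ∘ χ_{m+1|n}. In particular, φ_R(Z(U(gl(m+1|n)))) is a subalgebra of ℂ[E] ⊗ Z(U(gl(m|n))), and the square with maps φ_R, χ_{m+1|n}, χ_{0,m|n}, τ commutes. -/

import Mathlib

set_option maxHeartbeats 1000000
set_option synthInstance.maxHeartbeats 400000

noncomputable section
open scoped TensorProduct

/-- The index set `I = {1,…,m,1̄,…,n̄}` of `gl(m|n)`; `Sum.inl` are the even
(unbarred) indices, `Sum.inr` the odd (barred) ones.  The index set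
`Î = {0} ∪ I` of `gl(m+1|n)` is realized as `Ind (m+1) n`, with `0 = Sum.inl 0`. -/
abbrev Ind (m n : ℕ) := Fin m ⊕ Fin n

/-- Parity of an index, as `0` or `1`. -/
def pI {m n : ℕ} : Ind m n → ℕ := Sum.elim (fun _ => 0) (fun _ => 1)

/-- The total order `1 < ⋯ < m < 1̄ < ⋯ < n̄` on `I` (and, with `m+1` in place of `m`,
the order `0 < 1 < ⋯ < m < 1̄ < ⋯ < n̄` on `Î`). -/
def iltI {m n : ℕ} : Ind m n → Ind m n → Prop
  | Sum.inl a, Sum.inl b => a < b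
  | Sum.inl _, Sum.inr _ => True
  | Sum.inr _, Sum.inl _ => False
  | Sum.inr a, Sum.inr b => a < b

/-- The distinguished index `0` of `Î`. -/
def z0 {m n : ℕ} : Ind (m+1) n := Sum.inl 0

/-- The inclusion `I ↪ Î`. -/
def emb {m n : ℕ} : Ind m n → Ind (m+1) n := Sum.map Fin.succ id

lemma emb_injective {m n : ℕ} : Function.Injective (emb (m := m) (n := n)) := by
  intro a b h
  cases a <;> cases b <;> simp [emb, Fin.succ_inj] at h <;> simp [h]

lemma emb_ne_z0 {m n : ℕ} (a : Ind m n) : emb a ≠ z0 := by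
  cases a <;> simp [emb, z0, Fin.succ_ne_zero]

/-- Builds a linear map out of a space with basis `α` from a function on basis vectors. -/
def mkOp {α M : Type} [AddCommGroup M] [Module ℂ M] (g : α → M) : (α →₀ ℂ) →ₗ[ℂ] M :=
  Finsupp.lsum ℂ fun x => LinearMap.toSpanSingleton ℂ M (g x)

/-- Number of odd variables occurring before position `i`. -/
def cntB {n : ℕ} (b : Fin n → Bool) (i : Fin n) : ℕ :=
  (Finset.univ.filter fun j => j < i ∧ b j = true).card

/-- Number of odd variables occurring. -/
def cntA {n : ℕ} (b : Fin n → Bool) : ℕ := (Finset.univ.filter fun j => b j = true).card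


/-- The defining (super-)commutation relations of `gl`:
`e_ij e_kl − (−1)^{(|i|+|j|)(|k|+|l|)} e_kl e_ij = δ_jk e_il − (−1)^{(|i|+|j|)(|k|+|l|)} δ_li e_kj`. -/
inductive glRel (ι : Type) (p : ι → ℕ) [DecidableEq ι] :
    FreeAlgebra ℂ (ι × ι) → FreeAlgebra ℂ (ι × ι) → Prop
  | basic (i j k l : ι) : glRel ι p
      (FreeAlgebra.ι ℂ (i, j) * FreeAlgebra.ι ℂ (k, l)
        - ((-1 : ℂ) ^ ((p i + p j) * (p k + p l))) •
            (FreeAlgebra.ι ℂ (k, l) * FreeAlgebra.ι ℂ (i, j)))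
      ((if j = k then FreeAlgebra.ι ℂ (i, l) else 0)
        - ((-1 : ℂ) ^ ((p i + p j) * (p k + p l))) •
            (if l = i then FreeAlgebra.ι ℂ (k, j) else 0))

/-- The universal enveloping superalgebra of the general linear Lie superalgebra with
index set `ι` and parity `p`, presented by generators `e_ij` and the super-commutator
relations. -/
abbrev UEA (ι : Type) (p : ι → ℕ) [DecidableEq ι] : Type := RingQuot (glRel ι p)

/-- The generator `e_ij` of `UEA ι p`. -/
def gen {ι : Type} (p : ι → ℕ) [DecidableEq ι] (i j : ι) : UEA ι p :=
  RingQuot.mkAlgHom ℂ (glRel ι p) (FreeAlgebra.ι ℂ (i, j))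

/-- Monomials `t_0^{k} t^e t̄^b` of `F = ℂ[t_0^{±1},t_1,…,t_m] ⊗ Λ_n`. -/
abbrev FMon (m n : ℕ) := ℤ × (Fin m → ℕ) × (Fin n → Bool)

/-- `F = ℂ[t_0^{±1},t_1,…,t_m] ⊗ Λ_n` as the vector space with basis the monomials. -/
abbrev FSp (m n : ℕ) : Type := FMon m n →₀ ℂ

/-- The basis monomial of `F` attached to `x`. -/
def fmono {m n : ℕ} (x : FMon m n) : FSp m n := Finsupp.single x 1

/-- Left multiplication by `t_i/t_0` for an even index `i ∈ {1,…,m}`. -/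
def opDivE {m n : ℕ} (i : Fin m) : Module.End ℂ (FSp m n) :=
  mkOp fun x => fmono (x.1 - 1, Function.update x.2.1 i (x.2.1 i + 1), x.2.2)

/-- Left multiplication by `t_ī/t_0` for an odd index `ī`. -/
def opDivO {m n : ℕ} (i : Fin n) : Module.End ℂ (FSp m n) :=
  mkOp fun x => if x.2.2 i then 0 else
    ((-1 : ℂ) ^ (cntB x.2.2 i)) • fmono (x.1 - 1, x.2.1, Function.update x.2.2 i true)

/-- The operator `t_0 ∂_0`. -/
def opPar0 {m n : ℕ} : Module.End ℂ (FSp m n) :=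
  mkOp fun x => (x.1 : ℂ) • fmono x

/-- The operator `t_0 ∂_i` for an even index `i ∈ {1,…,m}`. -/
def opParE {m n : ℕ} (i : Fin m) : Module.End ℂ (FSp m n) :=
  mkOp fun x => (x.2.1 i : ℂ) • fmono (x.1 + 1, Function.update x.2.1 i (x.2.1 i - 1), x.2.2)

/-- The operator `t_0 ∂_ī` for an odd index `ī`. -/
def opParO {m n : ℕ} (i : Fin n) : Module.End ℂ (FSp m n) :=
  mkOp fun x => if x.2.2 i then
    ((-1 : ℂ) ^ (cntB x.2.2 i)) • fmono (x.1 + 1, x.2.1, Function.update x.2.2 i false) else 0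

/-- The multiplication operators `t_i/t_0`, `i ∈ I`. -/
def opDiv {m n : ℕ} : Ind m n → Module.End ℂ (FSp m n) := Sum.elim opDivE opDivO

/-- The operators `t_0 ∂_i`, `i ∈ Î`. -/
def opPar {m n : ℕ} : Ind (m+1) n → Module.End ℂ (FSp m n) :=
  Sum.elim (Fin.cases opPar0 opParE) opParO

/-- The multiplication operators `t_i/t_0` for `i ∈ Î` (equal to `1` for `i = 0`). -/
def opDivB {m n : ℕ} : Ind (m+1) n → Module.End ℂ (FSp m n) :=
  Sum.elim (Fin.cases 1 opDivE) opDivO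

/-- The generators of `D'(m|n)`. -/
def Dgens (m n : ℕ) : Set (Module.End ℂ (FSp m n)) := Set.range opDiv ∪ Set.range opPar

/-- The superalgebra `D'(m|n)` of differential operators on `F`, i.e. the subalgebra of
operators on `F` generated by `t_i/t_0` (`i ∈ I`) and `t_0∂_i` (`i ∈ Î`). -/
def Dprime (m n : ℕ) : Subalgebra ℂ (Module.End ℂ (FSp m n)) := Algebra.adjoin ℂ (Dgens m n)

/-- `t_i/t_0` as an element of `D'(m|n)`. -/
def tdiv {m n : ℕ} (i : Ind m n) : Dprime m n :=
  ⟨opDiv i, Algebra.subset_adjoin (Or.inl ⟨i, rfl⟩)⟩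

/-- `t_0∂_i` as an element of `D'(m|n)`. -/
def tpar {m n : ℕ} (i : Ind (m+1) n) : Dprime m n :=
  ⟨opPar i, Algebra.subset_adjoin (Or.inr ⟨i, rfl⟩)⟩

/-- `t_i/t_0` for `i ∈ Î` as an element of `D'(m|n)`. -/
def tdivB {m n : ℕ} : Ind (m+1) n → Dprime m n :=
  Sum.elim (Fin.cases 1 fun i => tdiv (Sum.inl i)) fun i => tdiv (Sum.inr i)

/-- The operator `t_a∂_b = (t_a/t_0)(t_0∂_b)` of `D'(m|n)`, for `a, b ∈ Î`. -/
def tdel {m n : ℕ} (a b : Ind (m+1) n) : Dprime m n := tdivB a * tpar b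

/-- The Euler operator `E = Σ_{i∈Î} t_i∂_i ∈ D'(m|n)`. -/
def En (m n : ℕ) : Dprime m n := ∑ i : Ind (m+1) n, tdel i i

noncomputable instance instDprimeRing (m n : ℕ) : Ring (Dprime m n) :=
  @Subalgebra.toRing ℂ (Module.End ℂ (FSp m n)) inferInstance inferInstance inferInstance _

noncomputable instance instDprimeAlgebra (m n : ℕ) : Algebra ℂ (Dprime m n) :=
  @Subalgebra.algebra ℂ (Module.End ℂ (FSp m n)) inferInstance inferInstance inferInstance _

/-- The super tensor product `D'(m|n) ⊗ U(gl(m|n))`, axiomatized: an algebra `T` together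
with algebra maps `d ↦ d⊗1`, `u ↦ 1⊗u`, such that the induced linear map
`D'(m|n) ⊗_ℂ U(gl(m|n)) → T` is a linear isomorphism and such that the Koszul sign rule
`(1⊗u)(d⊗1) = (−1)^{|u||d|}(d⊗1)(1⊗u)` holds on (super-)generators. -/
structure SuperTensor (m n : ℕ) where
  T : Type
  [ringT : Ring T]
  [algT : Algebra ℂ T]
  inD : Dprime m n →ₐ[ℂ] T
  inU : UEA (Ind m n) pI →ₐ[ℂ] T
  equiv : ((Dprime m n) ⊗[ℂ] (UEA (Ind m n) pI)) ≃ₗ[ℂ] T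
  equiv_tmul : ∀ (d : Dprime m n) (u : UEA (Ind m n) pI), equiv (d ⊗ₜ u) = inD d * inU u
  comm_div : ∀ (i j k : Ind m n),
    inU (gen pI i j) * inD (tdiv k) =
      ((-1 : ℂ) ^ ((pI i + pI j) * pI k)) • (inD (tdiv k) * inU (gen pI i j))
  comm_par : ∀ (i j : Ind m n) (k : Ind (m+1) n),
    inU (gen pI i j) * inD (tpar k) =
      ((-1 : ℂ) ^ ((pI i + pI j) * pI k)) • (inD (tpar k) * inU (gen pI i j))

attribute [instance] SuperTensor.ringT SuperTensor.algT

/-- The predicate expressing that `φ : U(gl(m+1|n)) → D'(m|n) ⊗ U(gl(m|n))` is given on the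
generators `e_ab` by the formulas of Theorem 3.1 (for the central element `R`). -/
def IsPhi {m n : ℕ} (ST : SuperTensor m n) (R : ST.T)
    (φ : UEA (Ind (m+1) n) pI →ₐ[ℂ] ST.T) : Prop :=
  (∀ a b : Ind m n, φ (gen pI (emb a) (emb b)) =
      ST.inD (tdel (emb a) (emb b)) + ST.inU (gen pI a b)
        + (if a = b then ((-1 : ℂ) ^ (pI a * pI b)) • R else 0)) ∧
  (∀ a : Ind m n, φ (gen pI (emb a) z0) =
      ST.inD (tdel (emb a) z0)
        - ∑ j : Ind m n, ((-1 : ℂ) ^ (pI a * pI j)) • (ST.inD (tdiv j) * ST.inU (gen pI a j))) ∧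
  (∀ b : Ind m n, φ (gen pI z0 (emb b)) = ST.inD (tdel z0 (emb b))) ∧
  (φ (gen pI z0 z0) = ST.inD (tdel z0 z0) + R)

/-- The generating set of `U(sl(m+1|n))` inside `U(gl(m+1|n))`: the `e_ij` with `i ≠ j`
together with `e_00 − (−1)^{|a|} e_aa` for `a ∈ I`. -/
def slSet (m n : ℕ) : Set (UEA (Ind (m+1) n) pI) :=
  {x | (∃ i j : Ind (m+1) n, i ≠ j ∧ x = gen pI i j) ∨
    (∃ a : Ind m n, x = gen pI z0 z0 - ((-1 : ℂ) ^ (pI a)) • gen pI (emb a) (emb a))}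

/-- `U(sl(m+1|n))`, realized as the subalgebra of `U(gl(m+1|n))` generated by `sl(m+1|n)`. -/
def Usl (m n : ℕ) : Subalgebra ℂ (UEA (Ind (m+1) n) pI) := Algebra.adjoin ℂ (slSet m n)

lemma mem_gen_ne {m n : ℕ} {i j : Ind (m+1) n} (h : i ≠ j) : gen pI i j ∈ Usl m n :=
  Algebra.subset_adjoin (Or.inl ⟨i, j, h, rfl⟩)

lemma mem_h {m n : ℕ} (a : Ind m n) :
    gen pI z0 z0 - ((-1 : ℂ) ^ (pI a)) • gen pI (emb a) (emb a) ∈ Usl m n :=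
  Algebra.subset_adjoin (Or.inr ⟨a, rfl⟩)

/-- The predicate expressing that `ψ : U(sl(m+1|n)) → D'(m|n) ⊗ U(gl(m|n))` is given on the
generators by the formulas of Corollary 3.2 (the homomorphism `φ^s`). -/
def IsPhiS {m n : ℕ} (ST : SuperTensor m n) (ψ : Usl m n →ₐ[ℂ] ST.T) : Prop :=
  (∀ (a b : Ind m n) (h : a ≠ b),
    ψ ⟨gen pI (emb a) (emb b), mem_gen_ne fun he => h (emb_injective he)⟩ =
      ST.inD (tdel (emb a) (emb b)) + ST.inU (gen pI a b)) ∧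
  (∀ a : Ind m n, ψ ⟨gen pI (emb a) z0, mem_gen_ne (emb_ne_z0 a)⟩ =
      ST.inD (tdel (emb a) z0)
        - ∑ j : Ind m n, ((-1 : ℂ) ^ (pI a * pI j)) • (ST.inD (tdiv j) * ST.inU (gen pI a j))) ∧
  (∀ b : Ind m n, ψ ⟨gen pI z0 (emb b), mem_gen_ne (Ne.symm (emb_ne_z0 b))⟩ =
      ST.inD (tdel z0 (emb b))) ∧
  (∀ a : Ind m n, ψ ⟨gen pI z0 z0 - ((-1 : ℂ) ^ (pI a)) • gen pI (emb a) (emb a), mem_h a⟩ =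
      ST.inD (tdel (m:=m) (n:=n) z0 z0 - ((-1 : ℂ) ^ (pI a)) • tdel (emb a) (emb a))
        - ((-1 : ℂ) ^ (pI a)) • ST.inU (gen pI a a))

/-- The first Gelfand invariant `G₁ = Σ_i e_ii`. -/
def G1 (ι : Type) (p : ι → ℕ) [DecidableEq ι] [Fintype ι] : UEA ι p := ∑ i : ι, gen p i i

/-- The distinguished central element `R₁ = −(1/(m−n+1))(E⊗1 + 1⊗G₁)`. -/
def R1elt {m n : ℕ} (ST : SuperTensor m n) : ST.T :=
  -(1 / ((m : ℂ) - n + 1)) • (ST.inD (En m n) + ST.inU (G1 (Ind m n) pI))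

/-- Monomials of the `D'(m|n)`-module `F_a`: such a monomial
`t_0^{a−k_1−⋯−k_{n̄}} t_1^{k_1}⋯t_m^{k_m} t_{1̄}^{k_{1̄}}⋯t_{n̄}^{k_{n̄}}` is determined by the
exponents `(k_1,…,k_m,k_{1̄},…,k_{n̄})`. -/
abbrev FaMon (m n : ℕ) := (Fin m → ℕ) × (Fin n → Bool)

/-- The module `F_a`, as the vector space with basis its monomials. -/
abbrev FaSp (m n : ℕ) : Type := FaMon m n →₀ ℂ

/-- A basis monomial of `F_a`. -/
def amono {m n : ℕ} (x : FaMon m n) : FaSp m n := Finsupp.single x 1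

/-- The parity of a monomial of `F_a`. -/
def parM {m n : ℕ} (x : FaMon m n) : ℕ := cntA x.2

/-- The monomial `t_0^a` of `F_a`. -/
def hwMon (m n : ℕ) : FaMon m n := (fun _ => 0, fun _ => false)

/-- Multiplication by `t_i/t_0` on `F_a`, even `i`. -/
def aDivE {m n : ℕ} (i : Fin m) : Module.End ℂ (FaSp m n) :=
  mkOp fun x => amono (Function.update x.1 i (x.1 i + 1), x.2)

/-- Multiplication by `t_ī/t_0` on `F_a`, odd `ī`. -/
def aDivO {m n : ℕ} (i : Fin n) : Module.End ℂ (FaSp m n) :=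
  mkOp fun x => if x.2 i then 0 else
    ((-1 : ℂ) ^ (cntB x.2 i)) • amono (x.1, Function.update x.2 i true)

/-- The operator `t_0∂_0` on `F_a` (the exponent of `t_0` is `a` minus the total degree of the
other variables). -/
def aPar0 {m n : ℕ} (a : ℂ) : Module.End ℂ (FaSp m n) :=
  mkOp fun x => (a - (∑ i, (x.1 i : ℂ)) - (cntA x.2 : ℂ)) • amono x

/-- The operator `t_0∂_i` on `F_a`, even `i`. -/
def aParE {m n : ℕ} (i : Fin m) : Module.End ℂ (FaSp m n) :=
  mkOp fun x => (x.1 i : ℂ) • amono (Function.update x.1 i (x.1 i - 1), x.2)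

/-- The operator `t_0∂_ī` on `F_a`, odd `ī`. -/
def aParO {m n : ℕ} (i : Fin n) : Module.End ℂ (FaSp m n) :=
  mkOp fun x => if x.2 i then
    ((-1 : ℂ) ^ (cntB x.2 i)) • amono (x.1, Function.update x.2 i false) else 0

/-- `t_i/t_0` on `F_a` for `i ∈ I`. -/
def aDiv {m n : ℕ} : Ind m n → Module.End ℂ (FaSp m n) := Sum.elim aDivE aDivO

/-- `t_0∂_i` on `F_a` for `i ∈ Î`. -/
def aParB {m n : ℕ} (a : ℂ) : Ind (m+1) n → Module.End ℂ (FaSp m n) :=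
  Sum.elim (Fin.cases (aPar0 a) aParE) aParO

/-- `t_i/t_0` on `F_a` for `i ∈ Î`. -/
def aDivB {m n : ℕ} : Ind (m+1) n → Module.End ℂ (FaSp m n) :=
  Sum.elim (Fin.cases 1 aDivE) aDivO

/-- The operator `t_i∂_j` on `F_a`, `i, j ∈ Î`. -/
def aTD {m n : ℕ} (a : ℂ) (i j : Ind (m+1) n) : Module.End ℂ (FaSp m n) :=
  aDivB i * aParB a j

/-- The simple highest weight module `L(λ)` over `U(gl(m|n))`: a simple module with a
(nonzero) highest weight vector of weight `λ`. -/
structure SimpleHW (m n : ℕ) (lam : Ind m n → ℂ) where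
  L : Type
  [acg : AddCommGroup L]
  [mod : Module ℂ L]
  ρ : UEA (Ind m n) pI →ₐ[ℂ] Module.End ℂ L
  v : L
  v_ne : v ≠ 0
  hw : ∀ i j : Ind m n, iltI i j → ρ (gen pI i j) v = 0
  hwt : ∀ i : Ind m n, ρ (gen pI i i) v = lam i • v
  simple : ∀ N : Submodule ℂ L, (∀ u x, x ∈ N → ρ u x ∈ N) → N = ⊥ ∨ N = ⊤

attribute [instance] SimpleHW.acg SimpleHW.mod

/-- The Verma module `M(λ)` over `U(gl(m|n))`: a module generated by a highest weight vector
of weight `λ` which is universal among such. -/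
structure VermaM (m n : ℕ) (lam : Ind m n → ℂ) where
  L : Type
  [acg : AddCommGroup L]
  [mod : Module ℂ L]
  ρ : UEA (Ind m n) pI →ₐ[ℂ] Module.End ℂ L
  v : L
  v_ne : v ≠ 0
  hw : ∀ i j : Ind m n, iltI i j → ρ (gen pI i j) v = 0
  hwt : ∀ i : Ind m n, ρ (gen pI i i) v = lam i • v
  gens : ∀ N : Submodule ℂ L, (∀ u x, x ∈ N → ρ u x ∈ N) → v ∈ N → N = ⊤
  univ : ∀ (W : Type) [AddCommGroup W] [Module ℂ W]
      (ρW : UEA (Ind m n) pI →ₐ[ℂ] Module.End ℂ W) (w : W),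
      (∀ i j : Ind m n, iltI i j → ρW (gen pI i j) w = 0) →
      (∀ i : Ind m n, ρW (gen pI i i) w = lam i • w) →
      ∃ g : L →ₗ[ℂ] W, g v = w ∧ ∀ u x, g (ρ u x) = ρW u (g x)

attribute [instance] VermaM.acg VermaM.mod

/-- The predicate expressing that `Θ` is the representation of `U(gl(m+1|n))` on
`F_a ⊗ L` obtained via `φ_R` from a representation `ρ` of `U(gl(m|n))` on `L`, where the
central element `R` acts by the scalar `r`; the formulas for the action of the generators on
pure tensors (with the appropriate Koszul signs) are written out explicitly. -/
def IsTensorRep {m n : ℕ} (a r : ℂ) {L : Type} [AddCommGroup L] [Module ℂ L]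
    (ρ : UEA (Ind m n) pI →ₐ[ℂ] Module.End ℂ L)
    (Θ : UEA (Ind (m+1) n) pI →ₐ[ℂ] Module.End ℂ (FaSp m n ⊗[ℂ] L)) : Prop :=
  (∀ (c d : Ind m n) (x : FaMon m n) (v : L),
    Θ (gen pI (emb c) (emb d)) (amono x ⊗ₜ[ℂ] v) =
      (aTD a (emb c) (emb d)) (amono x) ⊗ₜ[ℂ] v
      + ((-1 : ℂ) ^ ((pI c + pI d) * parM x)) • (amono x ⊗ₜ[ℂ] (ρ (gen pI c d) v))
      + (if c = d then (((-1 : ℂ) ^ (pI c * pI d)) * r) • (amono x ⊗ₜ[ℂ] v) else 0)) ∧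
  (∀ (c : Ind m n) (x : FaMon m n) (v : L),
    Θ (gen pI (emb c) z0) (amono x ⊗ₜ[ℂ] v) =
      (aTD a (emb c) z0) (amono x) ⊗ₜ[ℂ] v
      - ∑ j : Ind m n, (((-1 : ℂ) ^ (pI c * pI j)) * ((-1 : ℂ) ^ ((pI c + pI j) * parM x))) •
          ((aDiv j (amono x)) ⊗ₜ[ℂ] (ρ (gen pI c j) v))) ∧
  (∀ (d : Ind m n) (x : FaMon m n) (v : L),
    Θ (gen pI z0 (emb d)) (amono x ⊗ₜ[ℂ] v) = (aTD a z0 (emb d)) (amono x) ⊗ₜ[ℂ] v) ∧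
  (∀ (x : FaMon m n) (v : L),
    Θ (gen pI z0 z0) (amono x ⊗ₜ[ℂ] v) =
      (aTD a z0 z0) (amono x) ⊗ₜ[ℂ] v + r • (amono x ⊗ₜ[ℂ] v))

/-- The shifted weight `λ̃ = (a+r, λ_1+r, …, λ_m+r, λ_{1̄}−r, …, λ_{n̄}−r)`. -/
def lamTilde {m n : ℕ} (a r : ℂ) (lam : Ind m n → ℂ) : Ind (m+1) n → ℂ :=
  Sum.elim (Fin.cases (a + r) fun k => lam (Sum.inl k) + r) fun k => lam (Sum.inr k) - r

/-- The Weyl vector `ρ_{m|n} = (m, m−1, …, 1, −1, −2, …, −n)`. -/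
def rhoS {m n : ℕ} : Ind m n → ℂ := Sum.elim (fun k => (m : ℂ) - k) fun k => -(k : ℂ) - 1

/-- Antidominance of a weight of `gl(m|n)`:
`⟨λ+ρ, α^∨⟩ ∉ ℤ_{>0}` for all positive even roots `α`. -/
def Antidom {m n : ℕ} (lam : Ind m n → ℂ) : Prop :=
  (∀ i j : Fin m, i < j → ¬∃ N : ℕ,
    (lam (Sum.inl i) + rhoS (m:=m) (n:=n) (Sum.inl i)) - (lam (Sum.inl j) + rhoS (m:=m) (n:=n) (Sum.inl j)) = (N : ℂ) + 1) ∧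
  (∀ i j : Fin n, i < j → ¬∃ N : ℕ,
    (lam (Sum.inr i) + rhoS (m:=m) (n:=n) (Sum.inr i)) - (lam (Sum.inr j) + rhoS (m:=m) (n:=n) (Sum.inr j)) = (N : ℂ) + 1)

/-- Typicality of a weight of `gl(m|n)`:
`(λ+ρ, α) ≠ 0` for all positive odd isotropic roots `α = δ_i − ε_j`. -/
def Typical {m n : ℕ} (lam : Ind m n → ℂ) : Prop :=
  ∀ (i : Fin m) (j : Fin n),
    (lam (Sum.inl i) + rhoS (m:=m) (n:=n) (Sum.inl i)) + (lam (Sum.inr j) + rhoS (m:=m) (n:=n) (Sum.inr j)) ≠ 0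

/-- The submodule `ℂ[E] ⊗ Z(U(gl(m|n)))` of `D'(m|n) ⊗ U(gl(m|n))`. -/
def Zc {m n : ℕ} (ST : SuperTensor m n) : Submodule ℂ ST.T :=
  Submodule.span ℂ {y : ST.T | ∃ (k : ℕ) (z : UEA (Ind m n) pI),
    z ∈ Subalgebra.center ℂ (UEA (Ind m n) pI) ∧ y = ST.inD (En m n ^ k) * ST.inU z}

set_option linter.unusedSimpArgs false


theorem uea_ind {ι : Type} {p : ι → ℕ} [DecidableEq ι] {P : UEA ι p → Prop}
    (h1 : ∀ c : ℂ, P (algebraMap ℂ _ c)) (hg : ∀ i j, P (gen p i j))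
    (hm : ∀ x y, P x → P y → P (x * y)) (ha : ∀ x y, P x → P y → P (x + y))
    (u : UEA ι p) : P u := by
  obtain ⟨x, rfl⟩ := RingQuot.mkAlgHom_surjective ℂ (glRel ι p) u
  induction x using FreeAlgebra.induction with
  | grade0 r => rw [AlgHom.commutes]; exact h1 r
  | grade1 x => exact hg x.1 x.2
  | mul a b h1 h2 => rw [map_mul]; exact hm _ _ h1 h2
  | add a b h1 h2 => rw [map_add]; exact ha _ _ h1 h2

def ueaLift {ι : Type} {p : ι → ℕ} [DecidableEq ι] {B : Type} [Ring B] [Algebra ℂ B]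
    (A : ι → ι → B)
    (h : ∀ i j k l, A i j * A k l - ((-1 : ℂ) ^ ((p i + p j) * (p k + p l))) • (A k l * A i j) =
      (if j = k then A i l else 0)
        - ((-1 : ℂ) ^ ((p i + p j) * (p k + p l))) • (if l = i then A k j else 0)) :
    UEA ι p →ₐ[ℂ] B :=
  RingQuot.liftAlgHom ℂ ⟨FreeAlgebra.lift ℂ (fun x : ι × ι => A x.1 x.2), by
    rintro x y ⟨i, j, k, l⟩
    have := h i j k l
    simp only [map_sub, map_mul, map_smul, FreeAlgebra.lift_ι_apply]
    rw [this]
    split_ifs <;> simp⟩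

theorem ueaLift_gen {ι : Type} {p : ι → ℕ} [DecidableEq ι] {B : Type} [Ring B] [Algebra ℂ B]
    (A : ι → ι → B) (h) (i j : ι) : ueaLift (p := p) A h (gen p i j) = A i j := by
  unfold ueaLift gen
  rw [RingQuot.liftAlgHom_mkAlgHom_apply, FreeAlgebra.lift_ι_apply]

theorem gen_rel {ι : Type} (p : ι → ℕ) [DecidableEq ι] (i j k l : ι) :
    gen p i j * gen p k l - ((-1 : ℂ) ^ ((p i + p j) * (p k + p l))) • (gen p k l * gen p i j) =
      (if j = k then gen p i l else 0)
        - ((-1 : ℂ) ^ ((p i + p j) * (p k + p l))) • (if l = i then gen p k j else 0) := by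
  have := RingQuot.mkAlgHom_rel ℂ (glRel.basic (p := p) i j k l)
  simp only [map_sub, map_mul, map_smul] at this
  unfold gen
  rw [this]
  split_ifs <;> simp

theorem mkOp_single {α M : Type} [AddCommGroup M] [Module ℂ M] (g : α → M) (x : α) :
    mkOp g (Finsupp.single x 1) = g x := by
  simp [mkOp]


section Osc
variable {M : Type} [Fintype M] [DecidableEq M] (Q : M → M → ℂ) (al be : M → ℤ → ℂ)

def oS (j : M) (x : M → ℤ) : ℂ := ∏ l, (Q l j) ^ (x l)

def oA (j : M) : Module.End ℂ ((M → ℤ) →₀ ℂ) :=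
  mkOp fun x => Finsupp.single (x + Pi.single j 1) (oS Q j x * al j (x j))

def oB (j : M) : Module.End ℂ ((M → ℤ) →₀ ℂ) :=
  mkOp fun x => Finsupp.single (x - Pi.single j 1) (oS Q j x * be j (x j))

theorem oA_single (j : M) (x : M → ℤ) (c : ℂ) : oA Q al j (Finsupp.single x c) =
    Finsupp.single (x + Pi.single j 1) (c * (oS Q j x * al j (x j))) := by
  simp only [oA, mkOp, Finsupp.lsum_single, LinearMap.toSpanSingleton_apply, Finsupp.smul_single,
    smul_eq_mul]

theorem oB_single (j : M) (x : M → ℤ) (c : ℂ) : oB Q be j (Finsupp.single x c) =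
    Finsupp.single (x - Pi.single j 1) (c * (oS Q j x * be j (x j))) := by
  simp only [oB, mkOp, Finsupp.lsum_single, LinearMap.toSpanSingleton_apply, Finsupp.smul_single,
    smul_eq_mul]

variable {Q} (hQ : ∀ i j, Q i j * Q i j = 1)
include hQ

theorem oS_add (j k : M) (x : M → ℤ) : oS Q j (x + Pi.single k 1) = oS Q j x * Q k j := by
  have h0 : ∀ l, Q l j ≠ 0 := fun l h => by simpa [h] using hQ l j
  unfold oS
  simp only [Pi.add_apply, zpow_add₀ (h0 _), Finset.prod_mul_distrib]
  congr 1
  rw [Finset.prod_eq_single k]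
  · simp
  · intro b _ hb; simp [hb]
  · simp

theorem oS_sub (j k : M) (x : M → ℤ) : oS Q j (x - Pi.single k 1) = oS Q j x * Q k j := by
  have := oS_add hQ j k (x - Pi.single k 1)
  rw [sub_add_cancel] at this
  rw [this, mul_assoc, hQ, mul_one]

theorem oS_sq (j : M) (x : M → ℤ) : oS Q j x * oS Q j x = 1 := by
  unfold oS
  rw [← Finset.prod_mul_distrib]
  apply Finset.prod_eq_one
  intro i _
  rw [← mul_zpow, hQ, one_zpow]

variable {κ : M → M → ℂ} (hκ : ∀ i j, i ≠ j → κ i j = Q i j * Q j i) (hQd : ∀ i, Q i i = 1)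
include hκ hQd

theorem oAA (haa : ∀ j k, al j (k + 1) * al j k = κ j j * (al j (k + 1) * al j k)) (j k : M) :
    oA Q al j * oA Q al k = κ j k • (oA Q al k * oA Q al j) := by
  refine Finsupp.lhom_ext fun x c => ?_
  simp only [Module.End.mul_apply, LinearMap.smul_apply, oA_single, oS_add hQ, Finsupp.smul_single]
  rw [add_right_comm]
  congr 1
  by_cases h : j = k
  · subst h
    simp only [Pi.add_apply, Pi.single_eq_same, smul_eq_mul, hQd]
    linear_combination (c * oS Q j x * oS Q j x) * haa j (x j)
  · have h' : k ≠ j := fun e => h e.symm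
    simp only [Pi.add_apply, smul_eq_mul, hκ j k h, Pi.single_eq_of_ne h, Pi.single_eq_of_ne h', add_zero]
    linear_combination (-c * oS Q j x * oS Q k x * al j (x j) * al k (x k) * Q k j) * hQ j k

theorem oBB (hbb : ∀ j k, be j (k - 1) * be j k = κ j j * (be j (k - 1) * be j k)) (j k : M) :
    oB Q be j * oB Q be k = κ j k • (oB Q be k * oB Q be j) := by
  refine Finsupp.lhom_ext fun x c => ?_
  simp only [Module.End.mul_apply, LinearMap.smul_apply, oB_single, oS_sub hQ, Finsupp.smul_single]
  rw [sub_right_comm]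
  congr 1
  by_cases h : j = k
  · subst h
    simp only [Pi.sub_apply, Pi.single_eq_same, smul_eq_mul, hQd]
    linear_combination (c * oS Q j x * oS Q j x) * hbb j (x j)
  · have h' : k ≠ j := fun e => h e.symm
    simp only [Pi.sub_apply, smul_eq_mul, hκ j k h, Pi.single_eq_of_ne h, Pi.single_eq_of_ne h', sub_zero]
    linear_combination (-c * oS Q j x * oS Q k x * be j (x j) * be k (x k) * Q k j) * hQ j k

theorem oBA (hba : ∀ j k, be j (k + 1) * al j k - κ j j * (al j (k - 1) * be j k) = 1) (j k : M) :
    oB Q be j * oA Q al k = κ j k • (oA Q al k * oB Q be j) + (if j = k then 1 else 0) := by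
  refine Finsupp.lhom_ext fun x c => ?_
  simp only [Module.End.mul_apply, LinearMap.smul_apply, LinearMap.add_apply, oB_single, oA_single,
    oS_sub hQ, oS_add hQ, Finsupp.smul_single]
  rw [add_sub_right_comm]
  by_cases h : j = k
  · subst h
    simp only [Pi.sub_apply, Pi.add_apply, Pi.single_eq_same, smul_eq_mul, hQd, if_true,
      Module.End.one_apply, sub_add_cancel]
    rw [← Finsupp.single_add]
    congr 1
    linear_combination (c * oS Q j x * oS Q j x) * hba j (x j) + c * oS_sq hQ j x
  · have h' : k ≠ j := fun e => h e.symm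
    simp only [Pi.sub_apply, Pi.add_apply, smul_eq_mul, hκ j k h, Pi.single_eq_of_ne h,
      Pi.single_eq_of_ne h', sub_zero, add_zero, if_neg h, LinearMap.zero_apply]
    congr 1
    linear_combination (-c * oS Q j x * oS Q k x * be j (x j) * al k (x k) * Q k j) * hQ j k

end Osc

theorem osc_quad {W M : Type} [Ring W] [Algebra ℂ W] [DecidableEq M] {κ : M → M → ℂ} {A B : M → W}
    (hA : ∀ j k, A j * A k = κ j k • (A k * A j))
    (hB : ∀ j k, B j * B k = κ j k • (B k * B j))
    (hBA : ∀ j k, B j * A k = κ j k • (A k * B j) + (if j = k then 1 else 0))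
    (a b c d : M) (S : ℂ) (hS : S * (κ d a * κ c a * κ d b) = κ b c) :
    (A a * B b) * (A c * B d) - S • ((A c * B d) * (A a * B b)) =
      (if b = c then A a * B d else 0) - S • (if d = a then A c * B b else 0) := by
  have e1 : (A a * B b) * (A c * B d) =
      κ b c • (A a * A c * (B b * B d)) + (if b = c then A a * B d else 0) := by
    calc _ = A a * (B b * A c) * B d := by noncomm_ring
      _ = _ := by
        rw [hBA]; split_ifs
        · simp [mul_add, add_mul, mul_assoc]
        · simp [mul_assoc]
  have e2 : (A c * B d) * (A a * B b) =
      (κ d a * κ c a * κ d b) • (A a * A c * (B b * B d)) + (if d = a then A c * B b else 0) := by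
    calc _ = A c * (B d * A a) * B b := by noncomm_ring
      _ = κ d a • ((A c * A a) * (B d * B b)) + (if d = a then A c * B b else 0) := by
        rw [hBA]; split_ifs
        · simp [mul_add, add_mul, mul_assoc]
        · simp [mul_assoc]
      _ = _ := by
        rw [hA c a, hB d b, smul_mul_smul_comm, smul_smul, mul_assoc (κ d a)]
  rw [e1, e2, smul_add, smul_smul, hS]
  abel

theorem osc_sum {W ι : Type} [Ring W] [Algebra ℂ W] [DecidableEq ι] [Fintype ι]
    {A B : ι × ι → W} (i j k l : ι) (S : ℂ)
    (key : ∀ s t : ι, (A (s, i) * B (s, j)) * (A (t, k) * B (t, l))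
      - S • ((A (t, k) * B (t, l)) * (A (s, i) * B (s, j))) =
      (if (s, j) = (t, k) then A (s, i) * B (t, l) else 0)
        - S • (if (t, l) = (s, i) then A (t, k) * B (s, j) else 0)) :
    (∑ s, A (s, i) * B (s, j)) * (∑ s, A (s, k) * B (s, l))
      - S • ((∑ s, A (s, k) * B (s, l)) * (∑ s, A (s, i) * B (s, j))) =
      (if j = k then ∑ s, A (s, i) * B (s, l) else 0)
        - S • (if l = i then ∑ s, A (s, k) * B (s, j) else 0) := by
  rw [Finset.sum_mul_sum, Finset.sum_mul_sum, Finset.sum_comm (f := fun s t =>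
    (A (s, k) * B (s, l)) * (A (t, i) * B (t, j)))]
  simp only [Finset.smul_sum, ← Finset.sum_sub_distrib]
  rw [Finset.sum_congr rfl fun s _ => Finset.sum_congr rfl fun t _ => key s t]
  simp only [Finset.sum_sub_distrib, Prod.mk.injEq, ite_and, ← Finset.smul_sum]
  congr 1
  · simp only [Finset.sum_ite_eq, Finset.mem_univ, if_true]
    split_ifs <;> simp
  · simp only [Finset.sum_ite_eq', Finset.mem_univ, if_true]
    split_ifs <;> simp

/-- A representation with a nonzero highest weight vector. -/
structure HWRep (m n : ℕ) (lam : Ind m n → ℂ) where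
  L : Type
  [acg : AddCommGroup L]
  [mod : Module ℂ L]
  ρ : UEA (Ind m n) pI →ₐ[ℂ] Module.End ℂ L
  v : L
  v_ne : v ≠ 0
  hw : ∀ i j : Ind m n, iltI i j → ρ (gen pI i j) v = 0
  hwt : ∀ i : Ind m n, ρ (gen pI i i) v = lam i • v

attribute [instance] HWRep.acg HWRep.mod

section Build
variable {m n : ℕ}

open Classical in
def bAl (x : Ind m n × Ind m n) (k : ℤ) : ℂ :=
  if x.1 = x.2 then 1 else if iltI x.1 x.2 then
    (if pI x.1 = pI x.2 then 1 else if Even k then 1 else 0)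
  else (if pI x.1 = pI x.2 then (k : ℂ) else if Even k then 0 else 1)

open Classical in
def bBe (a : Ind m n → ℂ) (x : Ind m n × Ind m n) (k : ℤ) : ℂ :=
  if x.1 = x.2 then a x.1 + k else if iltI x.1 x.2 then
    (if pI x.1 = pI x.2 then (k : ℂ) else if Even k then 0 else 1)
  else (if pI x.1 = pI x.2 then 1 else if Even k then 1 else 0)

def bK (x y : Ind m n × Ind m n) : ℂ := (-1) ^ ((pI x.1 + pI x.2) * (pI y.1 + pI y.2))

open Classical in
def bQ (x y : Ind m n × Ind m n) : ℂ :=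
  if Fintype.equivFin _ x < Fintype.equivFin _ y then bK x y else 1

theorem bQ_sq (x y : Ind m n × Ind m n) : bQ x y * bQ x y = 1 := by
  unfold bQ bK
  split_ifs
  · rw [← mul_pow]; simp
  · simp

theorem bQ_d (x : Ind m n × Ind m n) : bQ x x = 1 := by simp [bQ]

theorem bK_symm (x y : Ind m n × Ind m n) : bK x y = bK y x := by
  unfold bK; rw [mul_comm]

theorem bK_Q (x y : Ind m n × Ind m n) (h : x ≠ y) : bK x y = bQ x y * bQ y x := by
  unfold bQ
  rcases lt_trichotomy (Fintype.equivFin _ x) (Fintype.equivFin _ y) with h1 | h1 | h1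
  · rw [if_pos h1, if_neg (not_lt_of_gt h1), mul_one]
  · exact absurd ((Fintype.equivFin _).injective h1) h
  · rw [if_pos h1, if_neg (not_lt_of_gt h1), one_mul, bK_symm]

theorem pI_cases (x : Ind m n) : pI x = 0 ∨ pI x = 1 := by cases x <;> simp [pI]

theorem bK_d (x : Ind m n × Ind m n) : bK x x = if pI x.1 = pI x.2 then 1 else -1 := by
  unfold bK
  rcases pI_cases x.1 with h | h <;> rcases pI_cases x.2 with h' | h' <;> norm_num [h, h']

theorem b_aa (j : Ind m n × Ind m n) (k : ℤ) :
    bAl j (k + 1) * bAl j k = bK j j * (bAl j (k + 1) * bAl j k) := by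
  rw [bK_d]
  unfold bAl
  rcases Int.even_or_odd k with hk | hk
  · have h1 : ¬ Even (k + 1) := by simpa [Int.even_add_one] using hk
    simp only [hk, h1]; split_ifs <;> simp_all
  · have h1 : Even (k + 1) := by simpa [Int.even_add_one] using hk
    have h0 : ¬ Even k := by simpa using hk
    simp only [h0, h1]; split_ifs <;> simp_all

theorem b_bb (a : Ind m n → ℂ) (j : Ind m n × Ind m n) (k : ℤ) :
    bBe a j (k - 1) * bBe a j k = bK j j * (bBe a j (k - 1) * bBe a j k) := by
  rw [bK_d]
  unfold bBe
  rcases Int.even_or_odd k with hk | hk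
  · have h1 : ¬ Even (k + 1) := by simpa [Int.even_add_one] using hk
    have h2 : ¬ Even (k - 1) := by simpa [Int.even_sub_one] using hk
    simp only [hk, h1, h2]; split_ifs <;> simp_all
  · have h1 : Even (k + 1) := by simpa [Int.even_add_one] using hk
    have h2 : Even (k - 1) := by simpa [Int.even_sub_one] using hk
    have h0 : ¬ Even k := by simpa using hk
    simp only [h0, h1, h2]; split_ifs <;> simp_all

theorem b_ba (a : Ind m n → ℂ) (j : Ind m n × Ind m n) (k : ℤ) :
    bBe a j (k + 1) * bAl j k - bK j j * (bAl j (k - 1) * bBe a j k) = 1 := by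
  rw [bK_d]
  unfold bBe bAl
  rcases Int.even_or_odd k with hk | hk
  · have h1 : ¬ Even (k + 1) := by simpa [Int.even_add_one] using hk
    have h2 : ¬ Even (k - 1) := by simpa [Int.even_sub_one] using hk
    simp only [hk, h1, h2]; split_ifs <;> simp_all
  · have h1 : Even (k + 1) := by simpa [Int.even_add_one] using hk
    have h2 : Even (k - 1) := by simpa [Int.even_sub_one] using hk
    have h0 : ¬ Even k := by simpa using hk
    simp only [h0, h1, h2]; split_ifs <;> simp_all

def bE (a : Ind m n → ℂ) (i j : Ind m n) :
    Module.End ℂ ((Ind m n × Ind m n → ℤ) →₀ ℂ) :=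
  ∑ s, oA bQ bAl (s, i) * oB bQ (bBe a) (s, j)

theorem bE_rel (a : Ind m n → ℂ) (i j k l : Ind m n) :
    bE a i j * bE a k l - ((-1 : ℂ) ^ ((pI i + pI j) * (pI k + pI l))) • (bE a k l * bE a i j) =
      (if j = k then bE a i l else 0)
        - ((-1 : ℂ) ^ ((pI i + pI j) * (pI k + pI l))) • (if l = i then bE a k j else 0) := by
  have hA := oAA (al := bAl) (bQ_sq (m := m) (n := n)) bK_Q bQ_d b_aa
  have hB := oBB (be := bBe a) (bQ_sq (m := m) (n := n)) bK_Q bQ_d (b_bb a)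
  have hBA := oBA (al := bAl) (be := bBe a) (bQ_sq (m := m) (n := n)) bK_Q bQ_d (b_ba a)
  have key : ∀ s t : Ind m n, _ := fun s t => osc_quad
    (W := Module.End ℂ ((Ind m n × Ind m n → ℤ) →₀ ℂ)) (κ := bK) (A := oA bQ bAl)
    (B := oB bQ (bBe a)) hA hB hBA (s, i) (s, j) (t, k) (t, l)
    ((-1 : ℂ) ^ ((pI i + pI j) * (pI k + pI l))) (by
      unfold bK
      simp only [← pow_add]
      rw [neg_one_pow_eq_pow_mod_two, neg_one_pow_eq_pow_mod_two (n := (pI s + pI j) * _)]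
      congr 1
      rcases pI_cases s with h | h <;> rcases pI_cases t with h' | h' <;>
      rcases pI_cases i with h1 | h1 <;> rcases pI_cases j with h2 | h2 <;>
      rcases pI_cases k with h3 | h3 <;> rcases pI_cases l with h4 | h4 <;>
      simp [h, h', h1, h2, h3, h4])
  exact osc_sum (W := Module.End ℂ ((Ind m n × Ind m n → ℤ) →₀ ℂ)) (A := oA bQ bAl)
    (B := oB bQ (bBe a)) i j k l _ key

theorem ilt_asymm {i j : Ind m n} (h : iltI i j) : ¬ iltI j i := by
  rcases i with i | i <;> rcases j with j | j <;> simp_all [iltI] <;> omega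

theorem ilt_irrefl (i : Ind m n) : ¬ iltI i i := fun h => ilt_asymm h h

theorem ilt_trans {i j k : Ind m n} (h : iltI i j) (h' : iltI j k) : iltI i k := by
  rcases i with i | i <;> rcases j with j | j <;> rcases k with k | k <;> simp_all [iltI] <;> omega

theorem ilt_tri (i j : Ind m n) : iltI i j ∨ i = j ∨ iltI j i := by
  rcases i with i | i <;> rcases j with j | j <;> simp [iltI] <;> omega

theorem bE_hw (a : Ind m n → ℂ) (i j : Ind m n) (hij : iltI i j) :
    bE a i j (Finsupp.single 0 1) = 0 := by
  have hne : i ≠ j := by rintro rfl; exact ilt_irrefl _ hij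
  unfold bE
  simp only [LinearMap.sum_apply, Module.End.mul_apply, oB_single, oA_single]
  refine Finset.sum_eq_zero fun s _ => ?_
  rw [Finsupp.single_eq_zero]
  have : ((0 : Ind m n × Ind m n → ℤ) - (Pi.single (s, j) 1 : Ind m n × Ind m n → ℤ)) (s, i) = 0 := by
    simp [Pi.single_apply, hne]
  rw [this]
  by_cases hs : iltI s j
  · have : bBe a (s, j) 0 = 0 := by
      have : s ≠ j := by rintro rfl; exact ilt_irrefl _ hs
      simp [bBe, this, hs]
    simp [this]
  · have h1 : iltI i s := by
      rcases ilt_tri s j with h | h | h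
      · exact absurd h hs
      · rw [h]; exact hij
      · exact ilt_trans hij h
    have : bAl (s, i) 0 = 0 := by
      have h2 : s ≠ i := by rintro rfl; exact ilt_irrefl _ h1
      simp [bAl, h2, ilt_asymm h1]
    simp [this]

theorem bE_wt (a : Ind m n → ℂ) (i : Ind m n) :
    bE a i i (Finsupp.single 0 1) = (∑ s, bBe a (s, i) 0 * bAl (s, i) (-1)) •
      Finsupp.single 0 1 := by
  unfold bE
  simp only [LinearMap.sum_apply, Module.End.mul_apply, oB_single, oA_single, Finset.sum_smul]
  refine Finset.sum_congr rfl fun s _ => ?_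
  rw [oS_sub bQ_sq, sub_add_cancel, Finsupp.smul_single]
  congr 1
  simp [bQ_d, oS]

theorem bW (a : Ind m n → ℂ) (i : Ind m n) : ∑ s, bBe a (s, i) 0 * bAl (s, i) (-1) =
    a i + ∑ s ∈ Finset.univ.erase i, bBe 0 (s, i) 0 * bAl (s, i) (-1) := by
  rw [← Finset.add_sum_erase _ _ (Finset.mem_univ i)]
  congr 1
  · simp [bBe, bAl]
  · refine Finset.sum_congr rfl fun s hs => ?_
    have : s ≠ i := Finset.ne_of_mem_erase hs
    simp [bBe, this]

end Build

theorem exists_hw (m n : ℕ) (lam : Ind m n → ℂ) : Nonempty (HWRep m n lam) := by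
  let a : Ind m n → ℂ := fun i =>
    lam i - ∑ s ∈ Finset.univ.erase i, bBe 0 (s, i) 0 * bAl (s, i) (-1)
  exact ⟨{
    L := (Ind m n × Ind m n → ℤ) →₀ ℂ
    ρ := ueaLift (bE a) (bE_rel a)
    v := Finsupp.single 0 1
    v_ne := by simp
    hw := fun i j h => by rw [ueaLift_gen]; exact bE_hw a i j h
    hwt := fun i => by rw [ueaLift_gen, bE_wt, bW]; simp [a] }⟩



def vJ (m n : ℕ) (lam : Ind m n → ℂ) : Submodule (UEA (Ind m n) pI) (UEA (Ind m n) pI) :=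
  Submodule.span _ ({x | ∃ i j : Ind m n, iltI i j ∧ x = gen pI i j} ∪
    {x | ∃ i : Ind m n, x = gen pI i i - algebraMap ℂ _ (lam i)})

theorem vJ_kill {m n : ℕ} {lam : Ind m n → ℂ} {W : Type} [AddCommGroup W] [Module ℂ W]
    (ρW : UEA (Ind m n) pI →ₐ[ℂ] Module.End ℂ W) (w : W)
    (h1 : ∀ i j : Ind m n, iltI i j → ρW (gen pI i j) w = 0)
    (h2 : ∀ i : Ind m n, ρW (gen pI i i) w = lam i • w) (x : UEA (Ind m n) pI)
    (hx : x ∈ vJ m n lam) : ρW x w = 0 := by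
  unfold vJ at hx
  induction hx using Submodule.span_induction with
  | mem x h =>
    rcases h with ⟨i, j, hij, rfl⟩ | ⟨i, rfl⟩
    · exact h1 i j hij
    · rw [map_sub, LinearMap.sub_apply, h2, AlgHom.commutes, Module.algebraMap_end_apply, sub_self]
  | zero => simp
  | add x y _ _ hx hy => rw [map_add, LinearMap.add_apply, hx, hy, add_zero]
  | smul a x _ hx => rw [smul_eq_mul, map_mul, Module.End.mul_apply, hx, map_zero]

theorem exists_verma {m n : ℕ} {lam : Ind m n → ℂ} {W : Type} [AddCommGroup W] [Module ℂ W]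
    (ρW : UEA (Ind m n) pI →ₐ[ℂ] Module.End ℂ W) (w : W) (hw : w ≠ 0)
    (h1 : ∀ i j : Ind m n, iltI i j → ρW (gen pI i j) w = 0)
    (h2 : ∀ i : Ind m n, ρW (gen pI i i) w = lam i • w) : Nonempty (VermaM m n lam) := by
  have act : ∀ u x : UEA (Ind m n) pI, (Algebra.lsmul ℂ ℂ (UEA (Ind m n) pI ⧸ vJ m n lam) u)
      (Submodule.Quotient.mk x) = Submodule.Quotient.mk (u * x) := fun u x => rfl
  refine ⟨{
    L := UEA (Ind m n) pI ⧸ vJ m n lam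
    ρ := Algebra.lsmul ℂ ℂ (UEA (Ind m n) pI ⧸ vJ m n lam)
    v := Submodule.Quotient.mk 1
    v_ne := ?_
    hw := ?_
    hwt := ?_
    gens := ?_
    univ := ?_ }⟩
  · intro h
    rw [Submodule.Quotient.mk_eq_zero] at h
    have := vJ_kill ρW w h1 h2 _ h
    rw [map_one, Module.End.one_apply] at this
    exact hw this
  · intro i j hij
    rw [act, mul_one, Submodule.Quotient.mk_eq_zero]
    exact Submodule.subset_span (Or.inl ⟨i, j, hij, rfl⟩)
  · intro i
    rw [act, mul_one, ← Submodule.Quotient.mk_smul, Submodule.Quotient.eq,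
      ← Algebra.algebraMap_eq_smul_one]
    exact Submodule.subset_span (Or.inr ⟨i, rfl⟩)
  · intro N hN hv
    rw [eq_top_iff]
    rintro x -
    obtain ⟨u, rfl⟩ := Submodule.Quotient.mk_surjective _ x
    have := hN u _ hv
    rwa [act, mul_one] at this
  · intro W' _ _ ρ' w' h1' h2'
    let f : UEA (Ind m n) pI →ₗ[ℂ] W' := (LinearMap.applyₗ w').comp ρ'.toLinearMap
    have hf : ∀ u, f u = ρ' u w' := fun u => rfl
    refine ⟨((vJ m n lam).restrictScalars ℂ).liftQ f ?_, ?_, ?_⟩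
    · intro x hx
      rw [LinearMap.mem_ker, hf]
      exact vJ_kill ρ' w' h1' h2' x hx
    · change f 1 = w'
      rw [hf]; simp
    · intro u x
      obtain ⟨y, rfl⟩ := Submodule.Quotient.mk_surjective _ x
      rw [act]
      change f (u * y) = ρ' u (f y)
      rw [hf, hf]; simp

theorem hw_scalar {m n : ℕ}
    (χs : Subalgebra.center ℂ (UEA (Ind m n) pI) →ₐ[ℂ] MvPolynomial (Ind m n) ℂ)
    (hχs : ∀ (z : Subalgebra.center ℂ (UEA (Ind m n) pI)) (lam : Ind m n → ℂ)
      (V : VermaM m n lam) (x : V.L),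
      V.ρ (z : UEA (Ind m n) pI) x =
        (MvPolynomial.eval (fun i => lam i + rhoS (m := m) (n := n) i) (χs z)) • x)
    {lam : Ind m n → ℂ} {W : Type} [AddCommGroup W] [Module ℂ W]
    (ρW : UEA (Ind m n) pI →ₐ[ℂ] Module.End ℂ W) (w : W) (hw : w ≠ 0)
    (h1 : ∀ i j : Ind m n, iltI i j → ρW (gen pI i j) w = 0)
    (h2 : ∀ i : Ind m n, ρW (gen pI i i) w = lam i • w)
    (z : Subalgebra.center ℂ (UEA (Ind m n) pI)) :
    ρW (z : UEA (Ind m n) pI) w =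
      (MvPolynomial.eval (fun i => lam i + rhoS (m := m) (n := n) i) (χs z)) • w := by
  obtain ⟨V⟩ := exists_verma ρW w hw h1 h2
  obtain ⟨g, hg, hg'⟩ := V.univ W ρW w h1 h2
  rw [← hg, ← hg', hχs, map_smul]

/-- Parity automorphism of `U`. -/
def sigU {m n : ℕ} : UEA (Ind m n) pI →ₐ[ℂ] UEA (Ind m n) pI :=
  ueaLift (fun i j => ((-1 : ℂ) ^ (pI i + pI j)) • gen pI i j) (by
    intro i j k l
    have := congrArg (fun x => ((-1 : ℂ) ^ (pI i + pI j + (pI k + pI l))) • x) (gen_rel pI i j k l)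
    simp only [smul_sub, smul_comm ((-1 : ℂ) ^ (pI i + pI j + (pI k + pI l)))
      ((-1 : ℂ) ^ ((pI i + pI j) * (pI k + pI l)))] at this
    simp only [smul_mul_smul_comm, ← pow_add, add_comm (pI k + pI l) (pI i + pI j)]
    rw [this]
    congr 1
    · split_ifs with h
      · subst h
        congr 1
        rw [show pI i + pI j + (pI j + pI l) = pI i + pI l + 2 * pI j by ring, pow_add, pow_mul]
        simp
      · simp
    · congr 1
      split_ifs with h
      · subst h
        congr 1
        rw [show pI l + pI j + (pI k + pI l) = pI k + pI j + 2 * pI l by ring, pow_add, pow_mul]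
        simp
      · simp)

theorem sigU_gen {m n : ℕ} (i j : Ind m n) :
    sigU (gen pI i j) = ((-1 : ℂ) ^ (pI i + pI j)) • gen pI i j := by
  unfold sigU; rw [ueaLift_gen]

theorem sigU_sq {m n : ℕ} (u : UEA (Ind m n) pI) : sigU (sigU u) = u := by
  induction u using uea_ind with
  | h1 c => simp
  | hg i j => rw [sigU_gen, map_smul, sigU_gen, smul_smul, ← mul_pow]; simp
  | hm x y hx hy => rw [map_mul, map_mul, hx, hy]
  | ha x y hx hy => rw [map_add, map_add, hx, hy]

theorem uea_smul_sub {m n : ℕ} (c : ℂ) (x y : UEA (Ind m n) pI) :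
    c • x - c • y = c • (x - y) := (smul_sub c x y).symm

def hH (m n : ℕ) : UEA (Ind m n) pI := ∑ i : Ind m n, (pI i : ℂ) • gen pI i i

def adH (m n : ℕ) : Module.End ℂ (UEA (Ind m n) pI) :=
  LinearMap.mulLeft ℂ (hH m n) - LinearMap.mulRight ℂ (hH m n)

theorem adH_apply {m n : ℕ} (u : UEA (Ind m n) pI) : adH m n u = hH m n * u - u * hH m n := by
  simp [adH]

theorem adH_gen {m n : ℕ} (i j : Ind m n) :
    adH m n (gen pI i j) = ((pI i : ℂ) - pI j) • gen pI i j := by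
  rw [adH_apply, hH, Finset.sum_mul, Finset.mul_sum, ← Finset.sum_sub_distrib]
  have : ∀ k : Ind m n, ((pI k : ℂ) • gen pI k k) * gen pI i j - gen pI i j * ((pI k : ℂ) • gen pI k k)
      = (pI k : ℂ) • (if k = i then gen pI i j else 0) - (pI k : ℂ) • (if k = j then gen pI i j else 0) := by
    intro k
    have := gen_rel pI k k i j
    rw [show (pI k + pI k) * (pI i + pI j) = 2 * (pI k * (pI i + pI j)) by ring, pow_mul] at this
    simp only [even_two, Even.neg_pow, one_pow, one_smul] at this
    rw [smul_mul_assoc, mul_smul_comm]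
    rw [uea_smul_sub, this, ← uea_smul_sub]
    congr 2
    · split_ifs with h
      · rw [h]
      · rfl
    · split_ifs with h h' h'
      · rw [h]
      · exact absurd h.symm h'
      · exact absurd h'.symm h
      · rfl
  rw [Finset.sum_congr rfl fun k _ => this k, Finset.sum_sub_distrib]
  simp only [smul_ite, smul_zero, Finset.sum_ite_eq', Finset.mem_univ, if_true]
  module

def sC (m n : ℕ) (c : ℤ) : Submodule ℂ (UEA (Ind m n) pI) :=
  Module.End.eigenspace (adH m n) (c : ℂ) ⊓
    Module.End.eigenspace (sigU (m := m) (n := n)).toLinearMap ((-1 : ℂ) ^ c)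

theorem mem_sC {m n : ℕ} {c : ℤ} {u : UEA (Ind m n) pI} :
    u ∈ sC m n c ↔ adH m n u = (c : ℂ) • u ∧ sigU u = ((-1 : ℂ) ^ c) • u := by
  simp [sC, Module.End.mem_eigenspace_iff]

theorem sC_top (m n : ℕ) (u : UEA (Ind m n) pI) : u ∈ ⨆ c, sC m n c := by
  induction u using uea_ind with
  | h1 c =>
    refine Submodule.mem_iSup_of_mem 0 (mem_sC.2 ⟨?_, ?_⟩)
    · rw [adH_apply, Algebra.commutes]; simp
    · simp
  | hg i j =>
    refine Submodule.mem_iSup_of_mem ((pI i : ℤ) - pI j) (mem_sC.2 ⟨?_, ?_⟩)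
    · rw [adH_gen]; simp
    · rw [sigU_gen]
      rcases pI_cases i with h | h <;> rcases pI_cases j with h' | h' <;> simp [h, h']
  | ha x y hx hy => exact add_mem hx hy
  | hm x y hx hy =>
    induction hx using Submodule.iSup_induction' with
    | zero => simp
    | add x x' _ _ h h' => rw [add_mul]; exact add_mem h h'
    | mem c x hx =>
      induction hy using Submodule.iSup_induction' with
      | zero => simp
      | add x x' _ _ h h' => rw [mul_add]; exact add_mem h h'
      | mem d y hy =>
        rw [mem_sC] at hx hy
        refine Submodule.mem_iSup_of_mem (c + d) (mem_sC.2 ⟨?_, ?_⟩)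
        · have : adH m n (x * y) = adH m n x * y + x * adH m n y := by
            simp only [adH_apply, mul_sub, sub_mul, mul_assoc]; abel
          rw [this, hx.1, hy.1]
          push_cast
          rw [add_smul, smul_mul_assoc, mul_smul_comm]
        · rw [map_mul, hx.2, hy.2, smul_mul_smul_comm, zpow_add₀ (by norm_num)]

theorem center_even {m n : ℕ} (z : UEA (Ind m n) pI)
    (hz : z ∈ Subalgebra.center ℂ (UEA (Ind m n) pI)) : sigU z = z := by
  have h0 : adH m n z = 0 := by
    rw [adH_apply, Subalgebra.mem_center_iff.1 hz, sub_self]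
  have ind : iSupIndep (sC m n) := by
    have := Module.End.eigenspaces_iSupIndep (adH m n)
    have h2 := this.comp (f := fun c : ℤ => (c : ℂ)) Int.cast_injective
    exact h2.mono fun c => inf_le_left
  obtain ⟨f, hf, hz'⟩ := (Submodule.mem_iSup_iff_exists_finsupp _ _).1 (sC_top m n z)
  have hs : ∑ c ∈ f.support, (c : ℂ) • f c = 0 := by
    rw [← h0, ← hz', Finsupp.sum, map_sum]
    exact Finset.sum_congr rfl fun c _ => (mem_sC.1 (hf c)).1.symm
  have hc := ((iSupIndep_iff_finsetSum_eq_zero_imp_eq_zero _).1 ind) f.support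
    (fun c => (c : ℂ) • f c) (fun c _ => Submodule.smul_mem _ _ (hf c)) hs
  rw [← hz', Finsupp.sum, map_sum]
  refine Finset.sum_congr rfl fun c hc' => ?_
  have h1 := hc c hc'
  rw [smul_eq_zero] at h1
  rcases h1 with h1 | h1
  · have : c = 0 := by exact_mod_cast h1
    rw [(mem_sC.1 (hf c)).2, this]; simp
  · rw [h1, map_zero]


section FSide
variable {m n : ℕ}

theorem cntA_true {b : Fin n → Bool} {i : Fin n} (h : b i = false) :
    cntA (Function.update b i true) = cntA b + 1 := by
  unfold cntA
  have : (Finset.univ.filter fun j => Function.update b i true j = true) =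
      insert i (Finset.univ.filter fun j => b j = true) := by
    ext j
    by_cases hj : j = i
    · subst hj; simp
    · simp [hj]
  rw [this, Finset.card_insert_of_notMem (by simp [h])]

theorem cntA_false {b : Fin n → Bool} {i : Fin n} (h : b i = true) :
    cntA (Function.update b i false) + 1 = cntA b := by
  have := cntA_true (b := Function.update b i false) (i := i) (by simp)
  rw [← this, Function.update_idem, ← h, Function.update_eq_self]

theorem cntB_update (b : Fin n → Bool) (i : Fin n) (c : Bool) :
    cntB (Function.update b i c) i = cntB b i := by
  unfold cntB
  congr 1
  ext j
  simp only [Finset.mem_filter, Finset.mem_univ, true_and]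
  refine and_congr_right fun h => ?_
  rw [Function.update_of_ne h.ne]

theorem sum_up (e : Fin m → ℕ) (i : Fin m) :
    ∑ j, (Function.update e i (e i + 1)) j = (∑ j, e j) + 1 := by
  rw [Finset.sum_update_of_mem (Finset.mem_univ i), ← Finset.add_sum_erase _ _ (Finset.mem_univ i),
    Finset.sdiff_singleton_eq_erase]
  ring

theorem sum_dn (e : Fin m → ℕ) (i : Fin m) (h : e i ≠ 0) :
    (∑ j, (Function.update e i (e i - 1)) j) + 1 = ∑ j, e j := by
  rw [Finset.sum_update_of_mem (Finset.mem_univ i), ← Finset.add_sum_erase _ _ (Finset.mem_univ i),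
    Finset.sdiff_singleton_eq_erase]
  omega

def pOp : Module.End ℂ (FSp m n) := mkOp fun x => ((-1 : ℂ) ^ cntA x.2.2) • fmono x

theorem opDivE_f (i : Fin m) (x : FMon m n) : opDivE i (fmono x) =
    fmono (x.1 - 1, Function.update x.2.1 i (x.2.1 i + 1), x.2.2) := mkOp_single _ _
theorem opDivO_f (i : Fin n) (x : FMon m n) : opDivO i (fmono x) = if x.2.2 i then 0 else
    ((-1 : ℂ) ^ (cntB x.2.2 i)) • fmono (x.1 - 1, x.2.1, Function.update x.2.2 i true) :=
  mkOp_single _ _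
theorem opPar0_f (x : FMon m n) : opPar0 (fmono x) = (x.1 : ℂ) • fmono x := mkOp_single _ _
theorem opParE_f (i : Fin m) (x : FMon m n) : opParE i (fmono x) =
    (x.2.1 i : ℂ) • fmono (x.1 + 1, Function.update x.2.1 i (x.2.1 i - 1), x.2.2) :=
  mkOp_single _ _
theorem opParO_f (i : Fin n) (x : FMon m n) : opParO i (fmono x) = if x.2.2 i then
    ((-1 : ℂ) ^ (cntB x.2.2 i)) • fmono (x.1 + 1, x.2.1, Function.update x.2.2 i false) else 0 :=
  mkOp_single _ _
theorem pOp_f (x : FMon m n) : pOp (fmono x) = ((-1 : ℂ) ^ cntA x.2.2) • fmono x :=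
  mkOp_single _ _

theorem F_ext {M : Type} [AddCommGroup M] [Module ℂ M] {f g : FSp m n →ₗ[ℂ] M}
    (h : ∀ x, f (fmono x) = g (fmono x)) : f = g := by
  refine Finsupp.lhom_ext' fun x => LinearMap.ext_ring ?_
  exact h x

theorem pOp_sq : (pOp : Module.End ℂ (FSp m n)) * pOp = 1 := by
  refine F_ext fun x => ?_
  rw [Module.End.mul_apply, pOp_f, map_smul, pOp_f, smul_smul, ← mul_pow]
  simp

theorem pOp_div (k : Ind m n) : pOp * opDiv k * pOp = ((-1 : ℂ) ^ pI k) • opDiv k := by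
  refine F_ext fun x => ?_
  simp only [Module.End.mul_apply, pOp_f, map_smul, LinearMap.smul_apply]
  rcases k with k | k
  · simp only [opDiv, Sum.elim_inl, opDivE_f, pOp_f, smul_smul, ← mul_pow, pI]
    simp
  · simp only [opDiv, Sum.elim_inr, opDivO_f, pI]
    split_ifs with h
    · simp
    · rw [map_smul, pOp_f, cntA_true (by simpa using h)]
      simp only [smul_smul]
      congr 1
      have : ((-1 : ℂ) ^ cntA x.2.2) * (-1) ^ cntA x.2.2 = 1 := by rw [← mul_pow]; simp
      rw [pow_succ]
      linear_combination (-(-1 : ℂ) ^ cntB x.2.2 k) * this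

theorem pOp_par (k : Ind (m+1) n) : pOp * opPar k * pOp = ((-1 : ℂ) ^ pI k) • opPar k := by
  refine F_ext fun x => ?_
  simp only [Module.End.mul_apply, pOp_f, map_smul, LinearMap.smul_apply]
  rcases k with k | k
  · refine Fin.cases ?_ (fun k => ?_) k
    · simp only [opPar, Sum.elim_inl, Fin.cases_zero, opPar0_f, map_smul, pOp_f, smul_smul, pI]
      congr 1
      have : ((-1 : ℂ) ^ cntA x.2.2) * (-1) ^ cntA x.2.2 = 1 := by rw [← mul_pow]; simp
      linear_combination (x.1 : ℂ) * this
    · simp only [opPar, Sum.elim_inl, Fin.cases_succ, opParE_f, map_smul, pOp_f, smul_smul, pI]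
      congr 1
      have : ((-1 : ℂ) ^ cntA x.2.2) * (-1) ^ cntA x.2.2 = 1 := by rw [← mul_pow]; simp
      linear_combination (x.2.1 k : ℂ) * this
  · simp only [opPar, Sum.elim_inr, opParO_f, pI]
    split_ifs with h
    · rw [map_smul, pOp_f, ← cntA_false h]
      simp only [smul_smul]
      congr 1
      have : ((-1 : ℂ) ^ cntA (Function.update x.2.2 k false)) *
        (-1) ^ cntA (Function.update x.2.2 k false) = 1 := by rw [← mul_pow]; simp
      rw [pow_succ]
      linear_combination (-(-1 : ℂ) ^ cntB x.2.2 k) * this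
    · simp

/-- Degree of the tail of a monomial. -/
def td (y : FaMon m n) : ℕ := (∑ i, y.1 i) + cntA y.2

def mon (k : ℤ) (y : FaMon m n) : FSp m n := fmono (k - td y, y)

theorem fmono_eq_mon (x : FMon m n) : fmono x = mon (x.1 + td x.2) x.2 := by
  simp [mon]

open Polynomial in
def evk (k : ℤ) : (FaMon m n →₀ ℂ[X]) →ₗ[ℂ] FSp m n :=
  Finsupp.lsum ℂ fun y => (LinearMap.toSpanSingleton ℂ (FSp m n) (mon k y)).comp
    (Polynomial.leval (k : ℂ))

open Polynomial in
theorem evk_single (k : ℤ) (y : FaMon m n) (p : ℂ[X]) :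
    evk k (Finsupp.single y p) = p.eval (k : ℂ) • mon k y := by
  simp [evk]

open Polynomial in
theorem evk_smul (k : ℤ) (p : ℂ[X]) (f : FaMon m n →₀ ℂ[X]) :
    evk k (p • f) = p.eval (k : ℂ) • evk k f := by
  induction f using Finsupp.induction_linear with
  | zero => simp
  | add f g hf hg => rw [smul_add, map_add, hf, hg, map_add, smul_add]
  | single y q => rw [Finsupp.smul_single, evk_single, evk_single, smul_eq_mul, eval_mul, smul_smul]

open Polynomial in
def IsPolyD (d : Module.End ℂ (FSp m n)) : Prop :=
  ∀ y : FaMon m n, ∃ f : FaMon m n →₀ ℂ[X], ∀ k : ℤ, d (mon k y) = evk k f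

theorem isPoly_div (i : Ind m n) : IsPolyD (opDiv i) := by
  intro y
  rcases i with i | i
  · refine ⟨Finsupp.single (Function.update y.1 i (y.1 i + 1), y.2) 1, fun k => ?_⟩
    rw [evk_single, Polynomial.eval_one, one_smul]
    simp only [opDiv, Sum.elim_inl, mon, opDivE_f]
    congr 2
    simp only [td, sum_up]
    push_cast; ring
  · by_cases h : y.2 i = true
    · refine ⟨0, fun k => ?_⟩
      simp [opDiv, mon, opDivO_f, h]
    · refine ⟨Finsupp.single (y.1, Function.update y.2 i true)
        (Polynomial.C ((-1) ^ (cntB y.2 i))), fun k => ?_⟩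
      rw [evk_single, Polynomial.eval_C]
      simp only [opDiv, Sum.elim_inr, mon, opDivO_f, if_neg h]
      congr 3
      simp only [td, cntA_true (show y.2 i = false by simpa using h)]
      push_cast; ring

theorem isPoly_par (i : Ind (m+1) n) : IsPolyD (opPar i : Module.End ℂ (FSp m n)) := by
  intro y
  rcases i with i | i
  · refine Fin.cases ?_ (fun i => ?_) i
    · refine ⟨Finsupp.single y (Polynomial.X - Polynomial.C (td y : ℂ)), fun k => ?_⟩
      rw [evk_single]
      simp only [opPar, Sum.elim_inl, Fin.cases_zero, mon, opPar0_f]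
      simp
    · by_cases h : y.1 i = 0
      · refine ⟨0, fun k => ?_⟩
        simp [opPar, mon, opParE_f, h]
      · refine ⟨Finsupp.single (Function.update y.1 i (y.1 i - 1), y.2)
          (Polynomial.C (y.1 i : ℂ)), fun k => ?_⟩
        rw [evk_single, Polynomial.eval_C]
        simp only [opPar, Sum.elim_inl, Fin.cases_succ, mon, opParE_f]
        congr 3
        simp only [td, ← sum_dn y.1 i h]
        push_cast; ring
  · by_cases h : y.2 i = true
    · refine ⟨Finsupp.single (y.1, Function.update y.2 i false)
        (Polynomial.C ((-1) ^ (cntB y.2 i))), fun k => ?_⟩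
      rw [evk_single, Polynomial.eval_C]
      simp only [opPar, Sum.elim_inr, mon, opParO_f, if_pos h]
      congr 3
      simp only [td, ← cntA_false h]
      push_cast; ring
    · refine ⟨0, fun k => ?_⟩
      simp [opPar, mon, opParO_f, h]

theorem isPoly_D (d : Dprime m n) : IsPolyD d.1 := by
  obtain ⟨d, hd⟩ := d
  unfold Dprime at hd
  change IsPolyD d
  induction hd using Algebra.adjoin_induction with
  | mem x hx =>
    rcases hx with ⟨i, rfl⟩ | ⟨i, rfl⟩
    · exact isPoly_div i
    · exact isPoly_par i
  | algebraMap r =>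
    intro y
    refine ⟨Finsupp.single y (Polynomial.C r), fun k => ?_⟩
    rw [evk_single, Module.algebraMap_end_apply, Polynomial.eval_C]
  | add a b _ _ ha hb =>
    intro y
    obtain ⟨f, hf⟩ := ha y
    obtain ⟨g, hg⟩ := hb y
    exact ⟨f + g, fun k => by rw [LinearMap.add_apply, hf, hg, map_add]⟩
  | mul a b _ _ ha hb =>
    intro y
    obtain ⟨g, hg⟩ := hb y
    choose f hf using ha
    refine ⟨g.sum fun y p => p • f y, fun k => ?_⟩
    rw [Module.End.mul_apply, hg]
    clear hg
    induction g using Finsupp.induction_linear with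
    | zero => simp
    | add g g' h h' =>
      rw [map_add, map_add, h, h', Finsupp.sum_add_index', map_add]
      · simp
      · intro a b c; rw [add_smul]
    | single y q =>
      rw [evk_single, map_smul, hf, Finsupp.sum_single_index (by simp), evk_smul]

theorem En_f (x : FMon m n) : (En m n).1 (fmono x) = ((x.1 : ℂ) + td x.2) • fmono x := by
  have h0 : ((En m n).1 : Module.End ℂ (FSp m n)) = ∑ i : Ind (m+1) n, (tdel i i).1 := by
    unfold En
    exact map_sum (Dprime m n).val _ _
  have h1 : ∀ i : Ind (m+1) n, ((tdel i i).1 : Module.End ℂ (FSp m n)) = (tdivB i).1 * opPar i :=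
    fun i => rfl
  have h2 : ∀ i : Fin m, ((tdivB (Sum.inl i.succ) : Dprime m n)).1 = opDivE i := fun i => rfl
  have h3 : ∀ i : Fin n, ((tdivB (Sum.inr i) : Dprime m n)).1 = opDivO i := fun i => rfl
  have h4 : ((tdivB (Sum.inl 0) : Dprime m n)).1 = 1 := rfl
  have h5 : ∀ i : Fin m, opDivE i (opParE i (fmono x)) = (x.2.1 i : ℂ) • fmono x := by
    intro i
    rw [opParE_f, map_smul, opDivE_f]
    by_cases h : x.2.1 i = 0
    · simp [h]
    · congr 2
      simp only [add_sub_cancel_right, Function.update_self, Function.update_idem,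
        Nat.sub_add_cancel (Nat.one_le_iff_ne_zero.2 h), Function.update_eq_self]
  have h6 : ∀ i : Fin n, opDivO i (opParO i (fmono x)) =
      (if x.2.2 i = true then (1 : ℂ) else 0) • fmono x := by
    intro i
    rw [opParO_f]
    by_cases h : x.2.2 i = true
    · rw [if_pos h, if_pos h, map_smul, opDivO_f]
      simp only [Function.update_self, cntB_update, smul_smul, ← mul_pow]
      simp only [Bool.false_eq_true, if_false, mul_neg, mul_one, neg_neg, one_pow, one_smul,
        add_sub_cancel_right, Function.update_idem]
      rw [smul_smul, ← mul_pow]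
      simp only [mul_neg, mul_one, neg_neg, one_pow, one_smul]
      rw [← h, Function.update_eq_self]
    · simp [h]
  rw [h0, LinearMap.sum_apply, Fintype.sum_sum_type, Fin.sum_univ_succ]
  simp only [h1, h2, h3, h4, Module.End.mul_apply, opPar, Sum.elim_inl, Sum.elim_inr, Fin.cases_zero,
    Fin.cases_succ, h5, h6, opPar0_f, Module.End.one_apply, ← Finset.sum_smul, ← add_smul]
  congr 1
  simp only [td, cntA]
  push_cast
  rw [Finset.sum_boole]
  ring

end FSide

section Coord
variable {m n : ℕ} {L : Type} [AddCommGroup L] [Module ℂ L]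

def coord (x : FMon m n) : FSp m n ⊗[ℂ] L →ₗ[ℂ] L :=
  (TensorProduct.lid ℂ L).toLinearMap.comp ((Finsupp.lapply x).rTensor L)

theorem coord_tmul (x : FMon m n) (f : FSp m n) (w : L) : coord x (f ⊗ₜ[ℂ] w) = f x • w := by
  simp [coord]

theorem coord_ext {a b : FSp m n ⊗[ℂ] L} (h : ∀ x, coord x a = coord x b) : a = b := by
  apply (TensorProduct.finsuppScalarLeft ℂ L (FMon m n)).injective
  ext x
  have : ∀ a : FSp m n ⊗[ℂ] L, (TensorProduct.finsuppScalarLeft ℂ L (FMon m n)) a x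
      = coord x a := by
    intro a
    induction a using TensorProduct.induction_on with
    | zero => simp
    | add a b ha hb => rw [map_add, map_add, Finsupp.add_apply, ha, hb]
    | tmul f w => rw [coord_tmul, TensorProduct.finsuppScalarLeft_apply_tmul_apply]
  rw [this, this, h]

theorem coord_comp (x y : FMon m n) (A : Module.End ℂ (FSp m n)) (c : ℂ)
    (h : ∀ z, (A (fmono z)) y = c * (fmono z : FSp m n) x) (w : FSp m n ⊗[ℂ] L) :
    coord y (A.rTensor L w) = c • coord x w := by
  have h' : ∀ f, (A f) y = c * f x := by
    have : (Finsupp.lapply y).comp A = c • (Finsupp.lapply x : FSp m n →ₗ[ℂ] ℂ) :=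
      F_ext fun z => h z
    exact fun f => LinearMap.congr_fun this f
  induction w using TensorProduct.induction_on with
  | zero => simp
  | add a b ha hb => simp only [map_add, ha, hb, smul_add]
  | tmul f w => rw [LinearMap.rTensor_tmul, coord_tmul, coord_tmul, h', smul_smul]

theorem coord_par0 {w : FSp m n ⊗[ℂ] L} {c : ℂ} (h : (opPar0 : Module.End ℂ (FSp m n)).rTensor L w = c • w)
    (x : FMon m n) (hx : (x.1 : ℂ) ≠ c) : coord x w = 0 := by
  have h1 := coord_comp x x opPar0 (x.1 : ℂ) (fun z => by
    rw [opPar0_f]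
    by_cases hz : z = x
    · subst hz; simp
    · simp [fmono, Finsupp.single_apply, hz]) w
  rw [h, map_smul] at h1
  have h2 : ((x.1 : ℂ) - c) • coord x w = 0 := by rw [sub_smul, h1, sub_self]
  exact (smul_eq_zero.1 h2).resolve_left (sub_ne_zero.2 hx)

theorem coord_parE {w : FSp m n ⊗[ℂ] L} {i : Fin m}
    (h : (opParE i : Module.End ℂ (FSp m n)).rTensor L w = 0)
    (x : FMon m n) (hx : x.2.1 i ≠ 0) : coord x w = 0 := by
  have h1 := coord_comp x (x.1 + 1, Function.update x.2.1 i (x.2.1 i - 1), x.2.2) (opParE i)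
    (x.2.1 i : ℂ) (fun z => by
    rw [opParE_f]
    by_cases hz : z = x
    · subst hz; simp [fmono]
    · have hz' : x ≠ z := fun e => hz e.symm
      by_cases h0 : z.2.1 i = 0
      · simp [fmono, Finsupp.single_apply, hz, h0]
      · rw [Finsupp.smul_apply, fmono, fmono, Finsupp.single_apply, Finsupp.single_apply, if_neg hz,
          if_neg]
        · simp
        · intro e
          apply hz
          simp only [Prod.mk.injEq] at e
          obtain ⟨e1, e2, e3⟩ := e
          refine Prod.ext (by omega) (Prod.ext (funext fun j => ?_) e3)
          have := congrFun e2 j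
          by_cases hj : j = i
          · subst hj; simp at this; omega
          · simpa [hj] using this) w
  rw [h, map_zero] at h1
  exact (smul_eq_zero.1 h1.symm).resolve_left (by exact_mod_cast hx)

theorem coord_parO {w : FSp m n ⊗[ℂ] L} {i : Fin n}
    (h : (opParO i : Module.End ℂ (FSp m n)).rTensor L w = 0)
    (x : FMon m n) (hx : x.2.2 i = true) : coord x w = 0 := by
  have h1 := coord_comp x (x.1 + 1, x.2.1, Function.update x.2.2 i false) (opParO i)
    ((-1) ^ cntB x.2.2 i) (fun z => by
    rw [opParO_f]
    by_cases hz : z = x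
    · subst hz; simp [fmono, hx]
    · by_cases h0 : z.2.2 i = true
      · rw [if_pos h0, Finsupp.smul_apply, fmono, fmono, Finsupp.single_apply, Finsupp.single_apply,
          if_neg hz, if_neg]
        · simp
        · intro e
          apply hz
          simp only [Prod.mk.injEq] at e
          obtain ⟨e1, e2, e3⟩ := e
          refine Prod.ext (by omega) (Prod.ext e2 (funext fun j => ?_))
          have := congrFun e3 j
          by_cases hj : j = i
          · subst hj; rw [h0, hx]
          · simpa [hj] using this
      · simp [fmono, Finsupp.single_apply, hz, h0]) w
  rw [h, map_zero] at h1
  exact (smul_eq_zero.1 h1.symm).resolve_left (by simp)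

theorem coord_par {w : FSp m n ⊗[ℂ] L}
    (h : ∀ b : Ind m n, (opPar (emb b) : Module.End ℂ (FSp m n)).rTensor L w = 0)
    (x : FMon m n) (hx : td x.2 ≠ 0) : coord x w = 0 := by
  by_cases h1 : ∃ i, x.2.1 i ≠ 0
  · obtain ⟨i, hi⟩ := h1
    exact coord_parE (i := i) (h (Sum.inl i)) x hi
  · by_cases h2 : ∃ i, x.2.2 i = true
    · obtain ⟨i, hi⟩ := h2
      exact coord_parO (i := i) (h (Sum.inr i)) x hi
    · exfalso
      push Not at h1 h2
      apply hx
      simp [td, h1, cntA, h2]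

end Coord


section Theta
variable {m n : ℕ}

theorem pP_sq (N : ℕ) : (pOp : Module.End ℂ (FSp m n)) ^ N * pOp ^ N = 1 := by
  rw [← (Commute.refl pOp).mul_pow, pOp_sq, one_pow]

theorem pP_conj {d : Module.End ℂ (FSp m n)} {k : ℕ} (h : pOp * d * pOp = ((-1 : ℂ) ^ k) • d)
    (N : ℕ) : pOp ^ N * d * pOp ^ N = ((-1 : ℂ) ^ (N * k)) • d := by
  induction N with
  | zero => simp
  | succ N ih =>
    rw [pow_succ', show pOp * pOp ^ N * d * (pOp * pOp ^ N) =
      pOp * (pOp ^ N * d * pOp ^ N) * pOp by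
        simp only [mul_assoc]; rw [(Commute.pow_self pOp N).eq],
      ih, mul_smul_comm, smul_mul_assoc, h, smul_smul, ← pow_add]
    congr 2; ring

theorem comm_D (ST : SuperTensor m n) (i j : Ind m n) (d : Dprime m n) :
    ∃ d' : Dprime m n, d'.1 = pOp ^ (pI i + pI j) * d.1 * pOp ^ (pI i + pI j) ∧
      ST.inU (gen pI i j) * ST.inD d = ST.inD d' * ST.inU (gen pI i j) := by
  obtain ⟨d, hd⟩ := d
  have hd' := hd
  unfold Dprime at hd'
  induction hd' using Algebra.adjoin_induction with
  | mem x hx =>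
    rcases hx with ⟨k, rfl⟩ | ⟨k, rfl⟩
    · refine ⟨((-1 : ℂ) ^ ((pI i + pI j) * pI k)) • tdiv k, (pP_conj (pOp_div k) _).symm, ?_⟩
      rw [map_smul, smul_mul_assoc]
      exact ST.comm_div i j k
    · refine ⟨((-1 : ℂ) ^ ((pI i + pI j) * pI k)) • tpar k, (pP_conj (pOp_par k) _).symm, ?_⟩
      rw [map_smul, smul_mul_assoc]
      exact ST.comm_par i j k
  | algebraMap r =>
    refine ⟨algebraMap ℂ (Dprime m n) r, ?_, ?_⟩
    · change algebraMap ℂ (Module.End ℂ (FSp m n)) r = _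
      rw [← Algebra.commutes, mul_assoc, pP_sq, mul_one]
    · change _ * ST.inD (algebraMap ℂ (Dprime m n) r) = _
      rw [AlgHom.commutes, Algebra.commutes]
  | add a b ha hb iha ihb =>
    obtain ⟨a', h1, h2⟩ := iha ha
    obtain ⟨b', h3, h4⟩ := ihb hb
    refine ⟨a' + b', ?_, ?_⟩
    · change a'.1 + b'.1 = _
      rw [h1, h3]; simp only [mul_add, add_mul]
    · change _ * ST.inD (⟨a, ha⟩ + ⟨b, hb⟩) = _
      rw [map_add, map_add, mul_add, add_mul, h2, h4]
  | mul a b ha hb iha ihb =>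
    obtain ⟨a', h1, h2⟩ := iha ha
    obtain ⟨b', h3, h4⟩ := ihb hb
    refine ⟨a' * b', ?_, ?_⟩
    · change a'.1 * b'.1 = _
      rw [h1, h3]
      calc _ = pOp ^ (pI i + pI j) * a * (pOp ^ (pI i + pI j) * pOp ^ (pI i + pI j)) * b *
            pOp ^ (pI i + pI j) := by simp only [mul_assoc]
        _ = _ := by rw [pP_sq]; simp only [mul_assoc, mul_one]
    · change _ * ST.inD (⟨a, ha⟩ * ⟨b, hb⟩) = _
      rw [map_mul, map_mul, ← mul_assoc, h2, mul_assoc, h4, mul_assoc]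

variable {L : Type} [AddCommGroup L] [Module ℂ L]

theorem pG_sq {V : Type} [AddCommGroup V] [Module ℂ V] {P : Module.End ℂ V} (hP : P * P = 1) (N : ℕ) :
    P ^ N * P ^ N = 1 := by
  rw [← (Commute.refl P).mul_pow, hP, one_pow]

def rhoG {V : Type} [AddCommGroup V] [Module ℂ V] (P : Module.End ℂ V) (hP : P * P = 1)
    (ρ : UEA (Ind m n) pI →ₐ[ℂ] Module.End ℂ L) :
    UEA (Ind m n) pI →ₐ[ℂ] Module.End ℂ (V ⊗[ℂ] L) :=
  ueaLift (B := Module.End ℂ (V ⊗[ℂ] L)) (p := pI)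
    (fun i j => TensorProduct.map (P ^ (pI i + pI j)) (ρ (gen pI i j))) (by
    intro i j k l
    have h := congrArg (fun x => TensorProduct.mapBilinear (RingHom.id ℂ) _ _ _ _
      (P ^ (pI i + pI j + (pI k + pI l))) (ρ x)) (gen_rel pI i j k l)
    simp only [map_sub, map_smul, map_mul, TensorProduct.mapBilinear_apply] at h
    rw [← TensorProduct.map_mul, ← TensorProduct.map_mul, ← pow_add, ← pow_add,
      add_comm (pI k + pI l) (pI i + pI j), h]
    congr 1
    · split_ifs with e
      · subst e
        rw [show pI i + pI j + (pI j + pI l) = pI i + pI l + (pI j + pI j) by ring, pow_add _ _ (pI j + pI j),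
          pow_add _ (pI j), pG_sq hP, mul_one]
      · simp
    · congr 1
      split_ifs with e
      · subst e
        rw [show pI l + pI j + (pI k + pI l) = pI k + pI j + (pI l + pI l) by ring, pow_add _ _ (pI l + pI l),
          pow_add _ (pI l), pG_sq hP, mul_one]
      · simp)

theorem rhoG_gen {V : Type} [AddCommGroup V] [Module ℂ V] (P : Module.End ℂ V) (hP : P * P = 1)
    (ρ : UEA (Ind m n) pI →ₐ[ℂ] Module.End ℂ L) (i j : Ind m n) :
    rhoG P hP ρ (gen pI i j) = TensorProduct.map (P ^ (pI i + pI j)) (ρ (gen pI i j)) := by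
  unfold rhoG; rw [ueaLift_gen]

def rhoP (ρ : UEA (Ind m n) pI →ₐ[ℂ] Module.End ℂ L) :
    UEA (Ind m n) pI →ₐ[ℂ] Module.End ℂ (FSp m n ⊗[ℂ] L) := rhoG pOp pOp_sq ρ

theorem rhoP_gen (ρ : UEA (Ind m n) pI →ₐ[ℂ] Module.End ℂ L) (i j : Ind m n) :
    rhoP ρ (gen pI i j) = TensorProduct.map (pOp ^ (pI i + pI j)) (ρ (gen pI i j)) :=
  rhoG_gen pOp pOp_sq ρ i j

theorem sigU_pow_gen (N : ℕ) (i j : Ind m n) :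
    (sigU ^ N) (gen pI i j) = ((-1 : ℂ) ^ ((pI i + pI j) * N)) • gen pI i j := by
  induction N with
  | zero => simp
  | succ N ih =>
    rw [pow_succ', AlgHom.mul_apply, ih, map_smul, sigU_gen, smul_smul, ← pow_add]
    congr 2

theorem sigU_pow_center (N : ℕ) (z : UEA (Ind m n) pI)
    (hz : z ∈ Subalgebra.center ℂ (UEA (Ind m n) pI)) : (sigU ^ N) z = z := by
  induction N with
  | zero => simp
  | succ N ih => rw [pow_succ', AlgHom.mul_apply, ih, center_even z hz]

theorem sigU_pow_inj (N : ℕ) (u : UEA (Ind m n) pI) : (sigU ^ N) ((sigU ^ N) u) = u := by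
  have h2 : (sigU : UEA (Ind m n) pI →ₐ[ℂ] UEA (Ind m n) pI) * sigU = 1 :=
    AlgHom.ext fun u => sigU_sq u
  rw [← AlgHom.mul_apply, ← (Commute.refl sigU).mul_pow, h2, one_pow]; rfl

theorem pP_f (N : ℕ) (x : FMon m n) : (pOp ^ N) (fmono x) = ((-1 : ℂ) ^ (N * cntA x.2.2)) • fmono x := by
  induction N with
  | zero => simp
  | succ N ih =>
    rw [pow_succ', Module.End.mul_apply, ih, map_smul, pOp_f, smul_smul, ← pow_add]
    congr 2; ring

theorem rhoP_apply (ρ : UEA (Ind m n) pI →ₐ[ℂ] Module.End ℂ L) (u : UEA (Ind m n) pI) :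
    ∀ (x : FMon m n) (w : L), rhoP ρ u (fmono x ⊗ₜ[ℂ] w) =
      fmono x ⊗ₜ[ℂ] (ρ ((sigU ^ cntA x.2.2) u) w) := by
  induction u using uea_ind with
  | h1 c => intro x w; rw [AlgHom.commutes, AlgHom.commutes, AlgHom.commutes]; simp
  | hg i j =>
    intro x w
    rw [rhoP_gen, TensorProduct.map_tmul, pP_f, sigU_pow_gen, map_smul, LinearMap.smul_apply,
      TensorProduct.smul_tmul]
  | hm u v hu hv =>
    intro x w
    rw [map_mul, map_mul, map_mul, Module.End.mul_apply, hv, hu]; rfl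
  | ha u v hu hv =>
    intro x w
    rw [map_add, map_add, map_add, LinearMap.add_apply, hv, hu, LinearMap.add_apply,
      TensorProduct.tmul_add]

variable (L) in
def rD : Dprime m n →ₐ[ℂ] Module.End ℂ (FSp m n ⊗[ℂ] L) :=
  (Module.End.rTensorAlgHom ℂ (FSp m n) L).comp (Dprime m n).val

theorem rD_apply (d : Dprime m n) : rD L d = d.1.rTensor L := rfl

theorem rD_tmul (d : Dprime m n) (f : FSp m n) (w : L) : rD L d (f ⊗ₜ[ℂ] w) = d.1 f ⊗ₜ[ℂ] w := rfl

def ThL (ST : SuperTensor m n) (ρ : UEA (Ind m n) pI →ₐ[ℂ] Module.End ℂ L) :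
    ST.T →ₗ[ℂ] Module.End ℂ (FSp m n ⊗[ℂ] L) :=
  (TensorProduct.lift ((LinearMap.mul ℂ (Module.End ℂ (FSp m n ⊗[ℂ] L))).compl₁₂
    (rD L).toLinearMap (rhoP ρ).toLinearMap)).comp ST.equiv.symm.toLinearMap

theorem ThL_DU (ST : SuperTensor m n) (ρ : UEA (Ind m n) pI →ₐ[ℂ] Module.End ℂ L) (d u) :
    ThL ST ρ (ST.inD d * ST.inU u) = rD L d * rhoP ρ u := by
  rw [← ST.equiv_tmul, ThL, LinearMap.comp_apply]
  simp

theorem ST_ind (ST : SuperTensor m n) {P : ST.T → Prop} (h0 : P 0)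
    (hDU : ∀ d u, P (ST.inD d * ST.inU u)) (ha : ∀ x y, P x → P y → P (x + y)) (X : ST.T) : P X := by
  obtain ⟨t, rfl⟩ := ST.equiv.surjective X
  induction t using TensorProduct.induction_on with
  | zero => rwa [map_zero]
  | tmul d u => rw [ST.equiv_tmul]; exact hDU d u
  | add a b h1 h2 => rw [map_add]; exact ha _ _ h1 h2

theorem ThL_D (ST : SuperTensor m n) (ρ : UEA (Ind m n) pI →ₐ[ℂ] Module.End ℂ L) (d) (X : ST.T) :
    ThL ST ρ (ST.inD d * X) = rD L d * ThL ST ρ X := by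
  induction X using ST_ind ST with
  | h0 => simp
  | hDU d' u => rw [← mul_assoc, ← map_mul, ThL_DU, ThL_DU, map_mul, mul_assoc]
  | ha x y hx hy => rw [mul_add, map_add, hx, hy, map_add, mul_add]

theorem ThL_U (ST : SuperTensor m n) (ρ : UEA (Ind m n) pI →ₐ[ℂ] Module.End ℂ L) (u) :
    ∀ (X : ST.T), ThL ST ρ (ST.inU u * X) = rhoP ρ u * ThL ST ρ X := by
  induction u using uea_ind with
  | h1 c =>
    intro X
    rw [AlgHom.commutes, AlgHom.commutes, ← Algebra.smul_def, ← Algebra.smul_def, map_smul]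
  | hg i j =>
    intro X
    induction X using ST_ind ST with
    | h0 => simp
    | hDU d u =>
      obtain ⟨d', h1, h2⟩ := comm_D ST i j d
      rw [← mul_assoc, h2, mul_assoc, ← map_mul, ThL_DU, ThL_DU, map_mul, ← mul_assoc, ← mul_assoc]
      congr 1
      rw [rhoP_gen, rD_apply, rD_apply, LinearMap.rTensor, LinearMap.rTensor, ← Module.End.one_eq_id,
        ← TensorProduct.map_mul, ← TensorProduct.map_mul, h1, mul_assoc, pP_sq, mul_one, one_mul, mul_one]
    | ha x y hx hy => rw [mul_add, map_add, hx, hy, map_add, mul_add]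
  | hm u v hu hv => intro X; rw [map_mul ST.inU, mul_assoc, hu, hv, map_mul, mul_assoc]
  | ha u v hu hv => intro X; rw [map_add, add_mul, map_add, hu, hv, map_add, add_mul]

def Th (ST : SuperTensor m n) (ρ : UEA (Ind m n) pI →ₐ[ℂ] Module.End ℂ L) :
    ST.T →ₐ[ℂ] Module.End ℂ (FSp m n ⊗[ℂ] L) :=
  AlgHom.ofLinearMap (ThL ST ρ) (by
    have := ThL_DU ST ρ 1 1
    simpa only [map_one, mul_one] using this) (by
    intro X Y
    induction X using ST_ind ST with
    | h0 => simp
    | hDU d u => rw [mul_assoc, ThL_D, ThL_U, ThL_DU, mul_assoc]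
    | ha x y hx hy => rw [add_mul, map_add, hx, hy, map_add, add_mul])

theorem Th_DU (ST : SuperTensor m n) (ρ : UEA (Ind m n) pI →ₐ[ℂ] Module.End ℂ L) (d u) :
    Th ST ρ (ST.inD d * ST.inU u) = rD L d * rhoP ρ u := ThL_DU ST ρ d u

theorem Th_D (ST : SuperTensor m n) (ρ : UEA (Ind m n) pI →ₐ[ℂ] Module.End ℂ L) (d) :
    Th ST ρ (ST.inD d) = rD L d := by
  have := Th_DU ST ρ d 1
  simpa only [map_one, mul_one] using this

theorem Th_U (ST : SuperTensor m n) (ρ : UEA (Ind m n) pI →ₐ[ℂ] Module.End ℂ L) (u) :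
    Th ST ρ (ST.inU u) = rhoP ρ u := by
  have := Th_DU ST ρ 1 u
  simpa only [map_one, one_mul] using this

theorem Th_DU_f (ST : SuperTensor m n) (ρ : UEA (Ind m n) pI →ₐ[ℂ] Module.End ℂ L) (d u)
    (x : FMon m n) (w : L) : Th ST ρ (ST.inD d * ST.inU u) (fmono x ⊗ₜ[ℂ] w) =
      d.1 (fmono x) ⊗ₜ[ℂ] (ρ ((sigU ^ cntA x.2.2) u) w) := by
  rw [Th_DU, Module.End.mul_apply, rhoP_apply, rD_tmul]

theorem Th_faithful (ST : SuperTensor m n) (X : ST.T)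
    (h : ∀ x, Th ST (Algebra.lmul ℂ (UEA (Ind m n) pI)) X (fmono x ⊗ₜ[ℂ] 1) = 0) : X = 0 := by
  obtain ⟨t, rfl⟩ := ST.equiv.surjective X
  rw [ST.equiv.map_eq_zero_iff]
  classical
  let B := Module.Basis.ofVectorSpace ℂ (UEA (Ind m n) pI)
  have h1 : ∀ (x : FMon m n) (t : Dprime m n ⊗[ℂ] UEA (Ind m n) pI),
      Th ST (Algebra.lmul ℂ (UEA (Ind m n) pI)) (ST.equiv t) (fmono x ⊗ₜ[ℂ] 1) =
      TensorProduct.map ((LinearMap.applyₗ (fmono x)).comp (Dprime m n).val.toLinearMap)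
        (sigU ^ cntA x.2.2).toLinearMap t := by
    intro x t
    induction t using TensorProduct.induction_on with
    | zero => simp
    | add a b ha hb => rw [map_add, map_add, LinearMap.add_apply, ha, hb, map_add]
    | tmul d u =>
      rw [ST.equiv_tmul, Th_DU_f]
      simp
  have h2 : ∀ x : FMon m n, ((LinearMap.applyₗ (fmono x)).comp
      (Dprime m n).val.toLinearMap).rTensor (UEA (Ind m n) pI) t = 0 := by
    intro x
    have h3 := congrArg ((sigU ^ cntA x.2.2).toLinearMap.lTensor (FSp m n)) (h1 x t)
    rw [h x, map_zero] at h3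
    rw [h3, ← LinearMap.comp_apply, LinearMap.rTensor, LinearMap.lTensor, ← TensorProduct.map_comp]
    congr 2
    exact LinearMap.ext fun u => (sigU_pow_inj _ u).symm
  apply (TensorProduct.equivFinsuppOfBasisRight B).injective
  ext b : 1
  rw [map_zero, Finsupp.zero_apply]
  apply Subtype.ext
  refine F_ext fun x => ?_
  have h4 : ∀ t : Dprime m n ⊗[ℂ] UEA (Ind m n) pI,
      (TensorProduct.equivFinsuppOfBasisRight B t b).1 (fmono x) =
      TensorProduct.equivFinsuppOfBasisRight B (((LinearMap.applyₗ (fmono x)).comp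
      (Dprime m n).val.toLinearMap).rTensor (UEA (Ind m n) pI) t) b := by
    intro t
    induction t using TensorProduct.induction_on with
    | zero => simp
    | add a b ha hb =>
      rw [map_add, map_add, map_add, Finsupp.add_apply, Finsupp.add_apply, ← ha, ← hb]; rfl
    | tmul d u =>
      rw [LinearMap.rTensor_tmul, TensorProduct.equivFinsuppOfBasisRight_apply_tmul_apply,
        TensorProduct.equivFinsuppOfBasisRight_apply_tmul_apply]
      rfl
  rw [h4, h2, map_zero]; rfl

end Theta


section Central
variable {m n : ℕ}

abbrev UU (m n : ℕ) := UEA (Ind m n) pI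

def vac (k : ℤ) : FMon m n := (k, fun _ => 0, fun _ => false)

theorem td_vac (k : ℤ) : td (vac k : FMon m n).2 = 0 := by simp [td, vac, cntA]

theorem cntA_vac (k : ℤ) : cntA (vac k : FMon m n).2.2 = 0 := by simp [vac, cntA]

theorem eq_vac (x : FMon m n) (h : td x.2 = 0) : x = vac x.1 := by
  obtain ⟨k, e, b⟩ := x
  simp only [td, Nat.add_eq_zero_iff, Finset.sum_eq_zero_iff, Finset.mem_univ, true_imp_iff, cntA,
    Finset.card_eq_zero, Finset.filter_eq_empty_iff, Bool.not_eq_true] at h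
  simp only [vac, Prod.mk.injEq, true_and]
  obtain ⟨h1, h2⟩ := h
  exact ⟨funext h1, funext fun j => @h2 j⟩

def dg (x : FMon m n) : ℤ := x.1 + td x.2

theorem dg_vac (k : ℤ) : dg (vac k : FMon m n) = k := by
  rw [dg, td_vac]; simp [vac]

theorem par_down (b : Ind m n) (x : FMon m n) : ∃ (c : ℂ) (x' : FMon m n),
    opPar (emb b) (fmono x) = c • fmono x' ∧ (c = 0 ∨ (td x'.2 + 1 = td x.2 ∧ dg x' = dg x)) := by
  rcases b with i | i
  · refine ⟨(x.2.1 i : ℂ), (x.1 + 1, Function.update x.2.1 i (x.2.1 i - 1), x.2.2), opParE_f i x, ?_⟩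
    by_cases h : x.2.1 i = 0
    · left; simp [h]
    · right
      have h1 := sum_dn x.2.1 i h
      have h2 : td (Function.update x.2.1 i (x.2.1 i - 1), x.2.2) + 1 = td x.2 := by
        simp only [td]; omega
      refine ⟨h2, ?_⟩
      simp only [dg]
      omega
  · by_cases h : x.2.2 i = true
    · refine ⟨(-1 : ℂ) ^ (cntB x.2.2 i), (x.1 + 1, x.2.1, Function.update x.2.2 i false),
        (opParO_f i x).trans (if_pos h), Or.inr ?_⟩
      have h1 := cntA_false h
      have h2 : td (x.2.1, Function.update x.2.2 i false) + 1 = td x.2 := by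
        simp only [td]; omega
      refine ⟨h2, ?_⟩
      simp only [dg]
      omega
    · exact ⟨0, x, (opParO_f i x).trans (by rw [if_neg h, zero_smul]), Or.inl rfl⟩

theorem par_vac (b : Ind m n) (k : ℤ) : opPar (emb b) (fmono (vac k : FMon m n)) = 0 := by
  obtain ⟨c, x', h1, rfl | h2⟩ := par_down b (vac k : FMon m n)
  · rw [h1, zero_smul]
  · rw [td_vac] at h2; omega

theorem evk_apply (k : ℤ) (f : FaMon m n →₀ Polynomial ℂ) (x : FMon m n) :
    evk k f x = if dg x = k then (f x.2).eval (k : ℂ) else 0 := by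
  induction f using Finsupp.induction_linear with
  | zero => simp
  | add f g hf hg =>
    rw [map_add, Finsupp.add_apply, hf, hg]
    split_ifs <;> simp
  | single y p =>
    rw [evk_single, mon, fmono, Finsupp.smul_apply, Finsupp.single_apply]
    by_cases hy : y = x.2
    · subst hy
      by_cases hk : dg x = k
      · rw [if_pos hk, if_pos]
        · simp
        · refine Prod.ext ?_ rfl
          simp only [dg] at hk ⊢; omega
      · rw [if_neg hk, if_neg]
        · simp
        · intro e
          apply hk
          have := congrArg Prod.fst e
          simp only [dg] at this ⊢; omega
    · rw [if_neg (fun e => hy (congrArg Prod.snd e)), Finsupp.single_eq_of_ne (Ne.symm hy)]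
      simp

abbrev ThU (ST : SuperTensor m n) := Th ST (Algebra.lmul ℂ (UU m n))

theorem ThU_DU (ST : SuperTensor m n) (d u) (x : FMon m n) (w : UU m n) :
    ThU ST (ST.inD d * ST.inU u) (fmono x ⊗ₜ[ℂ] w) =
      d.1 (fmono x) ⊗ₜ[ℂ] ((sigU ^ cntA x.2.2) u * w) := Th_DU_f ST _ d u x w

theorem ThU_right (ST : SuperTensor m n) (X : ST.T) (c u : UU m n) (x : FMon m n) :
    ThU ST X (fmono x ⊗ₜ[ℂ] (u * c)) =
      (LinearMap.mulRight ℂ c).lTensor (FSp m n) (ThU ST X (fmono x ⊗ₜ[ℂ] u)) := by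
  induction X using ST_ind ST with
  | h0 => simp
  | hDU d v =>
    rw [ThU_DU, ThU_DU, LinearMap.lTensor_tmul, LinearMap.mulRight_apply, mul_assoc]
  | ha a b h1 h2 => rw [map_add, LinearMap.add_apply, h1, h2, LinearMap.add_apply, map_add]

theorem ThU_deg (ST : SuperTensor m n) (X : ST.T) (x x' : FMon m n) (h : dg x' ≠ dg x) :
    coord x' (ThU ST X (fmono x ⊗ₜ[ℂ] 1)) = 0 := by
  induction X using ST_ind ST with
  | h0 => simp
  | hDU d v =>
    rw [ThU_DU, coord_tmul, fmono_eq_mon]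
    obtain ⟨f, hf⟩ := isPoly_D d x.2
    rw [hf, evk_apply, if_neg (show ¬ dg x' = x.1 + (td x.2 : ℤ) from h), zero_smul]
  | ha a b h1 h2 => rw [map_add, LinearMap.add_apply, map_add, h1, h2, add_zero]

def Yk (V : Type) [AddCommGroup V] [Module ℂ V] (k : ℤ) : (ℕ →₀ V) →ₗ[ℂ] V :=
  Finsupp.lsum ℂ fun j => ((k : ℂ) ^ j) • LinearMap.id

theorem Yk_single {V : Type} [AddCommGroup V] [Module ℂ V] (k : ℤ) (j : ℕ) (v : V) :
    Yk V k (Finsupp.single j v) = (k : ℂ) ^ j • v := by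
  simp [Yk]

theorem Yk_map {V W : Type} [AddCommGroup V] [Module ℂ V] [AddCommGroup W] [Module ℂ W]
    (g : V →ₗ[ℂ] W) (k : ℤ) (y : ℕ →₀ V) :
    Yk W k (Finsupp.mapRange.linearMap g y) = g (Yk V k y) := by
  induction y using Finsupp.induction_linear with
  | zero => simp
  | add a b ha hb => rw [map_add, map_add, ha, hb, map_add, map_add]
  | single j v =>
    rw [Finsupp.mapRange.linearMap_apply, Finsupp.mapRange_single, Yk_single, Yk_single, map_smul]

theorem Yk_zero {V : Type} [AddCommGroup V] [Module ℂ V] (y : ℕ →₀ V)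
    (h : ∀ k, Yk V k y = 0) : y = 0 := by
  ext j
  rw [Finsupp.zero_apply, ← Module.forall_dual_apply_eq_zero_iff ℂ]
  intro ξ
  let Q : (ℕ →₀ ℂ) →ₗ[ℂ] Polynomial ℂ := Finsupp.lsum ℂ fun j => Polynomial.monomial j
  have hQ1 : ∀ (k : ℤ) a, (Q a).eval (k : ℂ) = Yk ℂ k a := by
    intro k a
    induction a using Finsupp.induction_linear with
    | zero => simp
    | add a b ha hb => rw [map_add, map_add, Polynomial.eval_add, ha, hb]
    | single j c => rw [Yk_single]; simp [Q, mul_comm]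
  have hQ2 : ∀ j a, (Q a).coeff j = a j := by
    intro j a
    induction a using Finsupp.induction_linear with
    | zero => simp
    | add a b ha hb => rw [map_add, Polynomial.coeff_add, ha, hb, Finsupp.add_apply]
    | single i c => simp [Q, Polynomial.coeff_monomial, Finsupp.single_apply]
  let p : Polynomial ℂ := Q (Finsupp.mapRange.linearMap ξ y)
  have hp : ∀ k : ℤ, p.eval (k : ℂ) = 0 := by
    intro k
    rw [hQ1, Yk_map, h k, map_zero]
  have hp0 : p = 0 := by
    apply Polynomial.eq_zero_of_infinite_isRoot
    refine Set.Infinite.mono ?_ (Set.infinite_range_of_injective (f := fun k : ℤ => (k : ℂ))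
      Int.cast_injective)
    rintro _ ⟨k, rfl⟩
    exact hp k
  have : p.coeff j = 0 := by rw [hp0]; simp
  rw [hQ2] at this
  exact this

theorem exY {V : Type} [AddCommGroup V] [Module ℂ V] (p : Polynomial ℂ) (v : V) :
    ∃ y : ℕ →₀ V, ∀ k : ℤ, Yk V k y = p.eval (k : ℂ) • v := by
  induction p using Polynomial.induction_on' with
  | add p q hp hq =>
    obtain ⟨y, hy⟩ := hp
    obtain ⟨y', hy'⟩ := hq
    exact ⟨y + y', fun k => by rw [map_add, hy, hy', Polynomial.eval_add, add_smul]⟩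
  | monomial j a =>
    refine ⟨Finsupp.single j (a • v), fun k => ?_⟩
    rw [Yk_single, Polynomial.eval_monomial, smul_smul, mul_comm]

theorem ThU_poly (ST : SuperTensor m n) (X : ST.T) : ∃ y : ℕ →₀ UU m n, ∀ k : ℤ,
    coord (vac k) (ThU ST X (fmono (vac k) ⊗ₜ[ℂ] 1)) = Yk (UU m n) k y := by
  induction X using ST_ind ST with
  | h0 => exact ⟨0, fun k => by simp⟩
  | hDU d v =>
    obtain ⟨f, hf⟩ := isPoly_D d (fun _ => 0, fun _ => false)
    obtain ⟨y, hy⟩ := exY (f (fun _ => 0, fun _ => false)) v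
    refine ⟨y, fun k => ?_⟩
    rw [ThU_DU, coord_tmul, fmono_eq_mon, hy, cntA_vac, pow_zero, mul_one]
    change d.1 (mon (dg (vac k)) (fun _ => 0, fun _ => false)) (vac k) • v = _
    rw [dg_vac, hf, evk_apply, if_pos (dg_vac k)]
    rfl
  | ha a b h1 h2 =>
    obtain ⟨y, hy⟩ := h1
    obtain ⟨y', hy'⟩ := h2
    exact ⟨y + y', fun k => by rw [map_add, map_add, LinearMap.add_apply, map_add, hy, hy']⟩

theorem En_pow_f (j : ℕ) (x : FMon m n) :
    (En m n ^ j).1 (fmono x) = ((dg x : ℂ) ^ j) • fmono x := by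
  have : (En m n ^ j).1 = (En m n).1 ^ j := rfl
  rw [this]
  induction j with
  | zero => simp
  | succ j ih =>
    rw [pow_succ, Module.End.mul_apply, En_f, map_smul, ih rfl, smul_smul, pow_succ, mul_comm]
    simp [dg]

theorem ThU_P (ST : SuperTensor m n) (y : ℕ →₀ UU m n)
    (hy : ∀ j, y j ∈ Subalgebra.center ℂ (UU m n)) (x : FMon m n) :
    ThU ST (y.sum fun j u => ST.inD (En m n ^ j) * ST.inU u) (fmono x ⊗ₜ[ℂ] 1) =
      fmono x ⊗ₜ[ℂ] Yk (UU m n) (dg x) y := by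
  simp only [Finsupp.sum, map_sum, LinearMap.sum_apply, Yk, Finsupp.lsum_apply,
    TensorProduct.tmul_sum]
  refine Finset.sum_congr rfl fun j _ => ?_
  rw [ThU_DU, En_pow_f, sigU_pow_center _ _ (hy j), mul_one, LinearMap.smul_apply,
    LinearMap.id_apply, TensorProduct.smul_tmul]

theorem P_mem (ST : SuperTensor m n) (y : ℕ →₀ UU m n)
    (hy : ∀ j, y j ∈ Subalgebra.center ℂ (UU m n)) :
    (y.sum fun j u => ST.inD (En m n ^ j) * ST.inU u) ∈ Zc ST := by
  refine Submodule.sum_mem _ fun j _ => Submodule.subset_span ⟨j, y j, hy j, rfl⟩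

theorem mem_center_of_gen (u : UU m n) (h : ∀ i j, u * gen pI i j = gen pI i j * u) :
    u ∈ Subalgebra.center ℂ (UU m n) := by
  rw [Subalgebra.mem_center_iff]
  intro v
  induction v using uea_ind with
  | h1 c => exact Algebra.commutes c u
  | hg i j => exact (h i j).symm
  | hm a b ha hb => rw [mul_assoc, hb, ← mul_assoc, ha, mul_assoc]
  | ha a b ha hb => rw [add_mul, ha, hb, mul_add]

theorem Th_comm (ST : SuperTensor m n) {X A : ST.T} (h : X * A = A * X) (w : FSp m n ⊗[ℂ] UU m n) :
    ThU ST X (ThU ST A w) = ThU ST A (ThU ST X w) := by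
  rw [← Module.End.mul_apply, ← map_mul, h, map_mul, Module.End.mul_apply]

theorem mem_Zc (ST : SuperTensor m n) (X : ST.T)
    (hpar : ∀ b : Ind (m+1) n, X * ST.inD (tpar b) = ST.inD (tpar b) * X)
    (hab : ∀ a b : Ind m n, X * (ST.inD (tdel (emb a) (emb b)) + ST.inU (gen pI a b)) =
      (ST.inD (tdel (emb a) (emb b)) + ST.inU (gen pI a b)) * X) : X ∈ Zc ST := by
  obtain ⟨y, hy⟩ := ThU_poly ST X
  have hD : ∀ (b : Ind (m+1) n) (x : FMon m n),
      (opPar b : Module.End ℂ (FSp m n)).rTensor (UU m n) (ThU ST X (fmono x ⊗ₜ[ℂ] 1)) =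
        ThU ST X (opPar b (fmono x) ⊗ₜ[ℂ] 1) := by
    intro b x
    have := Th_comm ST (hpar b) (fmono x ⊗ₜ[ℂ] 1)
    rw [Th_D, rD_tmul, rD_apply] at this
    exact this.symm
  have hD0 : ∀ (x : FMon m n),
      (opPar0 : Module.End ℂ (FSp m n)).rTensor (UU m n) (ThU ST X (fmono x ⊗ₜ[ℂ] 1)) =
        (x.1 : ℂ) • ThU ST X (fmono x ⊗ₜ[ℂ] 1) := by
    intro x
    refine (hD z0 x).trans ?_
    change ThU ST X (opPar0 (fmono x) ⊗ₜ[ℂ] 1) = _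
    rw [opPar0_f, ← TensorProduct.smul_tmul', map_smul]
  have hA : ∀ k : ℤ, ThU ST X (fmono (vac k) ⊗ₜ[ℂ] 1) = fmono (vac k) ⊗ₜ[ℂ] Yk (UU m n) k y := by
    intro k
    refine coord_ext fun x => ?_
    rw [coord_tmul]
    by_cases hx : x = vac k
    · subst hx
      rw [hy]; simp [fmono]
    · have : (fmono (vac k) : FSp m n) x = 0 := Finsupp.single_eq_of_ne hx
      rw [this, zero_smul]
      by_cases h2 : td x.2 = 0
      · refine coord_par0 (hD0 (vac k)) x ?_
        intro e
        apply hx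
        have e2 : x.1 = k := by exact_mod_cast e
        rw [eq_vac x h2, e2]
      · refine coord_par (fun b => ?_) x h2
        rw [hD, par_vac, TensorProduct.zero_tmul, map_zero]
  have hB : ∀ (k : ℤ) (a b : Ind m n),
      Yk (UU m n) k y * gen pI a b = gen pI a b * Yk (UU m n) k y := by
    intro k a b
    have h1 : ∀ u : UU m n, ThU ST (ST.inD (tdel (emb a) (emb b)) + ST.inU (gen pI a b))
        (fmono (vac k) ⊗ₜ[ℂ] u) = fmono (vac k) ⊗ₜ[ℂ] (gen pI a b * u) := by
      intro u
      have e : (tdel (emb a) (emb b) : Dprime m n).1 (fmono (vac k)) = 0 := by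
        change (tdivB (emb a)).1 (opPar (emb b) (fmono (vac k))) = 0
        rw [par_vac, map_zero]
      rw [map_add, LinearMap.add_apply, Th_D, rD_tmul, e, TensorProduct.zero_tmul, zero_add, Th_U,
        rhoP_apply, cntA_vac, pow_zero]
      rfl
    have h2 := Th_comm ST (hab a b) (fmono (vac k) ⊗ₜ[ℂ] 1)
    rw [h1, hA, h1, mul_one] at h2
    have h3 := ThU_right ST X (gen pI a b) 1 (vac k)
    rw [one_mul] at h3
    rw [h3, hA, LinearMap.lTensor_tmul, LinearMap.mulRight_apply] at h2
    have h4 := congrArg (coord (vac k)) h2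
    rw [coord_tmul, coord_tmul] at h4
    simpa [fmono] using h4
  have hc : ∀ j, y j ∈ Subalgebra.center ℂ (UU m n) := by
    intro j
    refine mem_center_of_gen _ fun a b => ?_
    let g : UU m n →ₗ[ℂ] UU m n := LinearMap.mulRight ℂ (gen pI a b) - LinearMap.mulLeft ℂ (gen pI a b)
    have h1 : Finsupp.mapRange.linearMap g y = 0 := by
      refine Yk_zero _ fun k => ?_
      rw [Yk_map]
      change Yk (UU m n) k y * gen pI a b - gen pI a b * Yk (UU m n) k y = 0
      rw [hB, sub_self]
    have h2 := DFunLike.congr_fun h1 j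
    exact sub_eq_zero.1 h2
  have hC : ∀ (N : ℕ) (x : FMon m n), td x.2 = N →
      ThU ST X (fmono x ⊗ₜ[ℂ] 1) = fmono x ⊗ₜ[ℂ] Yk (UU m n) (dg x) y := by
    intro N
    induction N with
    | zero =>
      intro x hx
      rw [eq_vac x hx, dg_vac]; exact hA _
    | succ N ih =>
      intro x hx
      refine coord_ext fun x' => ?_
      rw [← sub_eq_zero, ← map_sub]
      by_cases h1 : td x'.2 = 0
      · by_cases h2 : x'.1 = x.1
        · have h3 : dg x' ≠ dg x := by simp only [dg]; omega
          have h4 : (fmono x : FSp m n) x' = 0 :=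
            Finsupp.single_eq_of_ne (fun e => h3 (by rw [e]))
          rw [map_sub, ThU_deg ST X x x' h3, coord_tmul, h4, zero_smul, sub_zero]
        · refine coord_par0 (c := (x.1 : ℂ)) ?_ x' (by exact_mod_cast h2)
          rw [map_sub, hD0, LinearMap.rTensor_tmul, opPar0_f, ← TensorProduct.smul_tmul',
            smul_sub]
      · refine coord_par (fun b => ?_) x' h1
        obtain ⟨c, x'', h2, h3⟩ := par_down b x
        rw [map_sub, hD, LinearMap.rTensor_tmul, h2, ← TensorProduct.smul_tmul',
          ← TensorProduct.smul_tmul', map_smul]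
        rcases h3 with rfl | ⟨h3, h4⟩
        · rw [zero_smul, zero_smul, sub_self]
        · rw [ih x'' (by omega), h4, sub_self]
  have hX : X = y.sum fun j u => ST.inD (En m n ^ j) * ST.inU u := by
    rw [← sub_eq_zero]
    apply Th_faithful
    intro x
    let G : ST.T →ₗ[ℂ] FSp m n ⊗[ℂ] UU m n :=
      (LinearMap.applyₗ (fmono x ⊗ₜ[ℂ] (1 : UU m n))).comp (ThU ST).toLinearMap
    refine (map_sub G _ _).trans ?_
    exact sub_eq_zero.2 ((hC _ x rfl).trans (ThU_P ST y hc x).symm)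
  rw [hX]
  exact P_mem ST y hc

theorem phi_mem_Zc (ST : SuperTensor m n) (R : ST.T)
    (hR : R ∈ Subalgebra.center ℂ ST.T)
    (φ : UEA (Ind (m+1) n) pI →ₐ[ℂ] ST.T) (hφ : IsPhi ST R φ)
    (z : UEA (Ind (m+1) n) pI) (hz : z ∈ Subalgebra.center ℂ (UEA (Ind (m+1) n) pI)) :
    φ z ∈ Zc ST := by
  have hc : ∀ g, φ z * φ g = φ g * φ z := fun g => by
    rw [← map_mul, ← map_mul, Subalgebra.mem_center_iff.1 hz]
  have hr : φ z * R = R * φ z := Subalgebra.mem_center_iff.1 hR _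
  obtain ⟨p1, p2, p3, p4⟩ := hφ
  have ht : ∀ b : Ind (m+1) n, (tdel z0 b : Dprime m n) = tpar b := fun b => one_mul _
  refine mem_Zc ST _ (fun b => ?_) (fun a b => ?_)
  · rcases b with b | b
    · refine Fin.cases ?_ (fun b => ?_) b
      · have := hc (gen pI z0 z0)
        rw [p4, ht, mul_add, add_mul, hr] at this
        exact add_right_cancel this
      · have := hc (gen pI z0 (emb (Sum.inl b)))
        rw [p3, ht] at this
        exact this
    · have := hc (gen pI z0 (emb (Sum.inr b)))
      rw [p3, ht] at this
      exact this
  · have := hc (gen pI (emb a) (emb b))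
    rw [p1] at this
    by_cases h : a = b
    · rw [if_pos h, mul_add, add_mul _ (_ • R), mul_smul_comm, smul_mul_assoc, hr] at this
      exact add_right_cancel this
    · rw [if_neg h, add_zero] at this
      exact this

end Central


section Final
variable {m n : ℕ}

def ptk (k : ℂ) (mu : Ind m n → ℂ) : Ind (m+1) n → ℂ :=
  Sum.elim (Fin.cases k fun i => mu (Sum.inl i)) fun i => mu (Sum.inr i)

theorem ptk_z0 (k : ℂ) (mu : Ind m n → ℂ) : ptk k mu z0 = k := rfl

theorem ptk_emb (k : ℂ) (mu : Ind m n → ℂ) (i : Ind m n) : ptk k mu (emb i) = mu i := by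
  rcases i with i | i <;> rfl

theorem ind_cases (i : Ind (m+1) n) : i = z0 ∨ ∃ a : Ind m n, i = emb a := by
  rcases i with i | i
  · refine Fin.cases (Or.inl rfl) (fun i => Or.inr ⟨Sum.inl i, rfl⟩) i
  · exact Or.inr ⟨Sum.inr i, rfl⟩

theorem ilt_emb {a b : Ind m n} (h : iltI (emb a) (emb b)) : iltI a b := by
  rcases a with a | a <;> rcases b with b | b <;> simp_all [iltI, emb]

theorem not_ilt_z0 {a : Ind m n} : ¬ iltI (emb a) (z0 : Ind (m+1) n) := by
  rcases a with a | a <;> simp [iltI, emb, z0]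

variable {ST : SuperTensor m n}
    {χs : Subalgebra.center ℂ (UEA (Ind m n) pI) →ₐ[ℂ] MvPolynomial (Ind m n) ℂ}

theorem Zc_scalar
    (hχs : ∀ (z : Subalgebra.center ℂ (UEA (Ind m n) pI)) (lam : Ind m n → ℂ)
      (V : VermaM m n lam) (x : V.L),
      V.ρ (z : UEA (Ind m n) pI) x =
        (MvPolynomial.eval (fun i => lam i + rhoS (m := m) (n := n) i) (χs z)) • x)
    (χ0 : Zc ST →ₗ[ℂ] MvPolynomial (Ind (m+1) n) ℂ)
    (hχ0 : ∀ (k : ℕ) (z : UEA (Ind m n) pI)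
      (hz : z ∈ Subalgebra.center ℂ (UEA (Ind m n) pI)),
      χ0 ⟨ST.inD (En m n ^ k) * ST.inU z, Submodule.subset_span ⟨k, z, hz, rfl⟩⟩ =
        (MvPolynomial.X z0) ^ k * MvPolynomial.rename emb (χs ⟨z, hz⟩))
    {lam : Ind m n → ℂ} {L : Type} [AddCommGroup L] [Module ℂ L]
    (ρ : UEA (Ind m n) pI →ₐ[ℂ] Module.End ℂ L) (v : L) (v_ne : v ≠ 0)
    (hw : ∀ i j : Ind m n, iltI i j → ρ (gen pI i j) v = 0)
    (hwt : ∀ i : Ind m n, ρ (gen pI i i) v = lam i • v) (k : ℤ) (X : ST.T) (hX : X ∈ Zc ST) :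
    Th ST ρ X (fmono (vac k) ⊗ₜ[ℂ] v) =
      MvPolynomial.eval (ptk (k : ℂ) fun i => lam i + rhoS i) (χ0 ⟨X, hX⟩) •
        (fmono (vac k) ⊗ₜ[ℂ] v) := by
  have hX' := hX
  unfold Zc at hX'
  induction hX' using Submodule.span_induction with
  | mem x h =>
    obtain ⟨j, z, hz, rfl⟩ := h
    rw [hχ0 _ _ hz, Th_DU_f, En_pow_f, sigU_pow_center _ _ hz, dg_vac,
      hw_scalar χs hχs ρ v v_ne hw hwt ⟨z, hz⟩, map_mul, map_pow, MvPolynomial.eval_X, ptk_z0,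
      MvPolynomial.eval_rename, TensorProduct.smul_tmul_smul]
    congr 4
    funext i
    exact (ptk_emb (k : ℂ) (fun i => lam i + rhoS i) i).symm
  | zero =>
    have : χ0 ⟨0, hX⟩ = 0 := map_zero χ0
    rw [this, map_zero, map_zero, zero_smul]; rfl
  | add x y hx hy h1 h2 =>
    have : χ0 ⟨x + y, hX⟩ = χ0 ⟨x, hx⟩ + χ0 ⟨y, hy⟩ := map_add χ0 ⟨x, hx⟩ ⟨y, hy⟩
    rw [this, map_add, map_add, LinearMap.add_apply, h1 hx, h2 hy, add_smul]
  | smul c x hx h1 =>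
    have : χ0 ⟨c • x, hX⟩ = c • χ0 ⟨x, hx⟩ := map_smul χ0 c ⟨x, hx⟩
    rw [this, map_smul, LinearMap.smul_apply, h1 hx, MvPolynomial.smul_eval, smul_smul]

theorem key
    (hχs : ∀ (z : Subalgebra.center ℂ (UEA (Ind m n) pI)) (lam : Ind m n → ℂ)
      (V : VermaM m n lam) (x : V.L),
      V.ρ (z : UEA (Ind m n) pI) x =
        (MvPolynomial.eval (fun i => lam i + rhoS (m := m) (n := n) i) (χs z)) • x)
    {R : ST.T} (hRZ : R ∈ Zc ST)
    {φ : UEA (Ind (m+1) n) pI →ₐ[ℂ] ST.T} (hφ : IsPhi ST R φ)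
    (χb : Subalgebra.center ℂ (UEA (Ind (m+1) n) pI) →ₐ[ℂ] MvPolynomial (Ind (m+1) n) ℂ)
    (hχb : ∀ (z : Subalgebra.center ℂ (UEA (Ind (m+1) n) pI)) (lam : Ind (m+1) n → ℂ)
      (V : VermaM (m+1) n lam) (x : V.L),
      V.ρ (z : UEA (Ind (m+1) n) pI) x =
        (MvPolynomial.eval (fun i => lam i + rhoS (m := m+1) (n := n) i) (χb z)) • x)
    (χ0 : Zc ST →ₗ[ℂ] MvPolynomial (Ind (m+1) n) ℂ)
    (hχ0 : ∀ (k : ℕ) (z : UEA (Ind m n) pI)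
      (hz : z ∈ Subalgebra.center ℂ (UEA (Ind m n) pI)),
      χ0 ⟨ST.inD (En m n ^ k) * ST.inU z, Submodule.subset_span ⟨k, z, hz, rfl⟩⟩ =
        (MvPolynomial.X z0) ^ k * MvPolynomial.rename emb (χs ⟨z, hz⟩))
    (lam : Ind m n → ℂ) (k : ℤ) (z : UEA (Ind (m+1) n) pI)
    (hz : z ∈ Subalgebra.center ℂ (UEA (Ind (m+1) n) pI)) (hzZ : φ z ∈ Zc ST) :
    MvPolynomial.eval (ptk (k : ℂ) fun i => lam i + rhoS i) (χ0 ⟨φ z, hzZ⟩) =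
      MvPolynomial.eval (fun i => lamTilde (k : ℂ)
        (MvPolynomial.eval (ptk (k : ℂ) fun i => lam i + rhoS i) (χ0 ⟨R, hRZ⟩)) lam i + rhoS i)
        (χb ⟨z, hz⟩) := by
  obtain ⟨⟨L, ρ, v, v_ne, hw, hwt⟩⟩ := exists_hw m n lam
  have sc := Zc_scalar hχs χ0 hχ0 ρ v v_ne hw hwt k
  have w_ne : (fmono (vac k) ⊗ₜ[ℂ] v : FSp m n ⊗[ℂ] L) ≠ 0 := by
    intro h
    have := congrArg (coord (vac k)) h
    rw [coord_tmul, map_zero] at this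
    apply v_ne
    simpa [fmono] using this
  set r := MvPolynomial.eval (ptk (k : ℂ) fun i => lam i + rhoS i) (χ0 ⟨R, hRZ⟩) with hr
  obtain ⟨p1, p2, p3, p4⟩ := hφ
  have hdel : ∀ (a : Ind (m+1) n) (b : Ind m n),
      Th ST ρ (ST.inD (tdel a (emb b))) (fmono (vac k) ⊗ₜ[ℂ] v) = 0 := by
    intro a b
    have e : (tdel a (emb b) : Dprime m n).1 (fmono (vac k)) = 0 := by
      change (tdivB a).1 (opPar (emb b) (fmono (vac k))) = 0
      rw [par_vac, map_zero]
    rw [Th_D, rD_tmul, e, TensorProduct.zero_tmul]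
  have hU : ∀ u, Th ST ρ (ST.inU u) (fmono (vac k) ⊗ₜ[ℂ] v) = fmono (vac k) ⊗ₜ[ℂ] (ρ u v) := by
    intro u
    rw [Th_U, rhoP_apply, cntA_vac, pow_zero]; rfl
  have H := hw_scalar χb hχb (lam := lamTilde (k : ℂ) r lam) ((Th ST ρ).comp φ)
    (fmono (vac k) ⊗ₜ[ℂ] v) w_ne ?_ ?_ ⟨z, hz⟩
  · rw [AlgHom.comp_apply] at H
    have H2 := (sc (φ z) hzZ).symm.trans H
    have H3 := congrArg (coord (vac k)) H2
    rw [map_smul, map_smul, coord_tmul] at H3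
    have hv : (fmono (vac k) : FSp m n) (vac k) • v = v := by simp [fmono]
    rw [hv] at H3
    exact smul_left_injective ℂ v_ne H3
  · intro i j hij
    rw [AlgHom.comp_apply]
    rcases ind_cases i with rfl | ⟨a, rfl⟩
    · rcases ind_cases j with rfl | ⟨b, rfl⟩
      · exact absurd hij (ilt_irrefl _)
      · rw [p3, hdel]
    · rcases ind_cases j with rfl | ⟨b, rfl⟩
      · exact absurd hij not_ilt_z0
      · have hab := ilt_emb hij
        rw [p1, if_neg (fun e => ilt_irrefl _ (e ▸ hab)), add_zero, map_add, LinearMap.add_apply, hdel, hU,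
          hw a b hab, TensorProduct.tmul_zero, add_zero]
  · intro i
    rw [AlgHom.comp_apply]
    rcases ind_cases i with rfl | ⟨a, rfl⟩
    · have e : (tdel z0 z0 : Dprime m n).1 (fmono (vac k)) = (k : ℂ) • fmono (vac k) :=
        opPar0_f (vac k)
      rw [p4, map_add, LinearMap.add_apply, sc R hRZ, Th_D, rD_tmul, e, ← TensorProduct.smul_tmul',
        ← add_smul]
      rfl
    · rw [p1, if_pos rfl, map_add, map_add, LinearMap.add_apply, LinearMap.add_apply, hdel, hU, hwt,
        map_smul, LinearMap.smul_apply, sc R hRZ, ← hr, zero_add, TensorProduct.tmul_smul, smul_smul,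
        ← add_smul]
      congr 1
      rcases a with a | a
      · simp [pI, emb, lamTilde]
      · simp [pI, emb, lamTilde, sub_eq_add_neg]

end Final

/-- Theorem 5.2.  The restriction of `φ_R` to the center satisfies
`φ_R|_{Z(U(gl(m+1|n)))} = χ_{0,m|n}^{−1} ∘ τ ∘ χ_{m+1|n}`; in particular the image of the
center lands in `ℂ[E] ⊗ Z(U(gl(m|n)))` and the Harish-Chandra square commutes.  The
Harish-Chandra homomorphisms `χ_{m|n}`, `χ_{m+1|n}` are characterized by their defining
property (`z` acts on the Verma module `M(λ)` by `ev_{λ+ρ}(χ(z))`), `χ_{0,m|n}` by its values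
on `E^k ⊗ z`, and `τ` is the substitution
`p ↦ p(ℓ_0+ℓ+m+1, ℓ_1+ℓ, …, ℓ_m+ℓ, ℓ_{1̄}−ℓ, …, ℓ_{n̄}−ℓ)` with `ℓ = χ_{0,m|n}(R)`. -/
theorem stmt11 (m n : ℕ) (ST : SuperTensor m n) (R : ST.T)
    (hR : R ∈ Subalgebra.center ℂ ST.T) (hRZ : R ∈ Zc ST)
    (φ : UEA (Ind (m+1) n) pI →ₐ[ℂ] ST.T) (hφ : IsPhi ST R φ)
    (χs : Subalgebra.center ℂ (UEA (Ind m n) pI) →ₐ[ℂ] MvPolynomial (Ind m n) ℂ)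
    (hχs : ∀ (z : Subalgebra.center ℂ (UEA (Ind m n) pI)) (lam : Ind m n → ℂ)
      (V : VermaM m n lam) (x : V.L),
      V.ρ (z : UEA (Ind m n) pI) x =
        (MvPolynomial.eval (fun i => lam i + rhoS (m := m) (n := n) i) (χs z)) • x)
    (χb : Subalgebra.center ℂ (UEA (Ind (m+1) n) pI) →ₐ[ℂ] MvPolynomial (Ind (m+1) n) ℂ)
    (hχb : ∀ (z : Subalgebra.center ℂ (UEA (Ind (m+1) n) pI)) (lam : Ind (m+1) n → ℂ)
      (V : VermaM (m+1) n lam) (x : V.L),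
      V.ρ (z : UEA (Ind (m+1) n) pI) x =
        (MvPolynomial.eval (fun i => lam i + rhoS (m := m+1) (n := n) i) (χb z)) • x)
    (χ0 : Zc ST →ₗ[ℂ] MvPolynomial (Ind (m+1) n) ℂ)
    (hχ0 : ∀ (k : ℕ) (z : UEA (Ind m n) pI)
      (hz : z ∈ Subalgebra.center ℂ (UEA (Ind m n) pI)),
      χ0 ⟨ST.inD (En m n ^ k) * ST.inU z, Submodule.subset_span ⟨k, z, hz, rfl⟩⟩ =
        (MvPolynomial.X z0) ^ k * MvPolynomial.rename emb (χs ⟨z, hz⟩)) :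
    ∀ (z : UEA (Ind (m+1) n) pI) (hz : z ∈ Subalgebra.center ℂ (UEA (Ind (m+1) n) pI)),
      ∃ h : φ z ∈ Zc ST,
        χ0 ⟨φ z, h⟩ =
          MvPolynomial.aeval
            (Sum.elim
              (Fin.cases (MvPolynomial.X z0 + χ0 ⟨R, hRZ⟩ + MvPolynomial.C ((m : ℂ) + 1))
                (fun k => MvPolynomial.X (Sum.inl k.succ) + χ0 ⟨R, hRZ⟩))
              (fun k => MvPolynomial.X (Sum.inr k) - χ0 ⟨R, hRZ⟩))
            (χb ⟨z, hz⟩) := by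
  intro z hz
  have h := phi_mem_Zc ST R hR φ hφ z hz
  refine ⟨h, ?_⟩
  apply MvPolynomial.funext_set
    (fun i : Ind (m+1) n => if i = z0 then Set.range (Int.cast : ℤ → ℂ) else Set.univ)
  · intro i
    split_ifs
    · exact Set.infinite_range_of_injective Int.cast_injective
    · exact Set.infinite_univ
  · intro x hx
    have hx0 := hx z0 (Set.mem_univ _)
    simp only [if_true] at hx0
    obtain ⟨k, hk⟩ := hx0
    have hxe : x = ptk (k : ℂ) fun i : Ind m n => (x (emb i) - rhoS i) + rhoS i := by
      funext i
      rcases ind_cases i with rfl | ⟨a, rfl⟩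
      · rw [ptk_z0, hk]
      · rw [ptk_emb, sub_add_cancel]
    have hkey := key hχs hRZ hφ χb hχb χ0 hχ0 (fun i => x (emb i) - rhoS i) k z hz h
    rw [← hxe] at hkey
    rw [hkey]
    set r := MvPolynomial.eval x (χ0 ⟨R, hRZ⟩) with hr
    rw [← MvPolynomial.coe_aeval_eq_eval, ← MvPolynomial.coe_aeval_eq_eval]
    change _ = ((MvPolynomial.aeval x).comp (MvPolynomial.aeval _)) (χb ⟨z, hz⟩)
    rw [MvPolynomial.comp_aeval]
    change MvPolynomial.aeval _ (χb ⟨z, hz⟩) = _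
    congr 2
    funext i
    rw [MvPolynomial.aeval_eq_eval]
    rcases i with i | i
    · refine Fin.cases ?_ (fun i => ?_) i
      · simp [lamTilde, rhoS, z0] at hk ⊢
        rw [← hk]
      · simp [lamTilde, rhoS, emb]
        ring
    · simp [lamTilde, rhoS, emb]
      ring
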